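/- arXiv:1106.6343 — 3 statements merged into one kernel-verified Lean document; each statement's English description precedes it below -/
import Mathlib

section
/- Let A = R[X,Y]/(F, F_X, F_Y) and let R′ be the image of R under the canonical map R → A. Then A is an integral domain, and for every element a ∈ A there exist elements r, s ∈ R′ with s ≠ 0 and s·a = r; that is, the inclusion R′ → A induces an isomorphism of the fields of fractions Q(R′) = Q(A). -/
open MvPolynomial

set_option synthInstance.maxHeartbeats 1000000
set_option maxHeartbeats 1000000

def idxSet (p q : ℕ) : Finset (ℕ × ℕ) :=
  (Finset.range q ×ˢ Finset.range p).filter fun t => t.1 * p + t.2 * q < p * q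

/-- `R = K[{A_νμ}]`, the polynomial ring in the indeterminates `A_νμ`, `(ν,μ) ∈ I`. -/
abbrev coefRing (K : Type) [Field K] (p q : ℕ) := MvPolynomial ↥(idxSet p q) K

/-- `R[X,Y]`, with `X 0 = X` and `X 1 = Y`. -/
abbrev genRing (K : Type) [Field K] (p q : ℕ) := MvPolynomial (Fin 2) (coefRing K p q)

/-- The generic normed Weierstraß polynomial
`F = Y^p − X^q + Σ_{(ν,μ) ∈ I} A_νμ X^ν Y^μ ∈ R[X,Y]` of type `p,q`. -/
noncomputable def genF (K : Type) [Field K] (p q : ℕ) : genRing K p q :=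
  X 1 ^ p - X 0 ^ q +
    ∑ i : idxSet p q, C (MvPolynomial.X i) * X 0 ^ (i : ℕ × ℕ).1 * X 1 ^ (i : ℕ × ℕ).2

/-!
Split the parameters `A_νμ` into `A₀`, `A₁`, `A₂`, the coefficients of `1`, `X`, `Y`, and the
others, so that `F = f + A₀ + A₁ X + A₂ Y`. The equations `F = F_X = F_Y = 0` can be solved for
`A₀`, `A₁`, `A₂` in terms of `X`, `Y` and the other parameters, so `A` is a polynomial ring in
`n - 1` variables over `K`, and the `n` parameters satisfy an algebraic relation `D` in `A`. If `D`
has minimal degree and `K` is perfect, its partial derivatives do not all vanish on the parameters.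

Differentiating the relation along `X` and `Y` shows that the vector
`(X ∂₀D - ∂₁D, Y ∂₀D - ∂₂D)` is in the kernel of the Hessian matrix of `f`. The Hessian
determinant is nonzero, because it is so after specialising `f` to `Y^p - X^q + XY`. Hence
`X = ∂₁D / ∂₀D` and `Y = ∂₂D / ∂₀D`: the singular point of a curve is read off from the tangent
hyperplane to the hypersurface of singular curves.
-/

section Relations

variable {R σ : Type*}

theorem derivation_aeval {A M : Type*} [CommSemiring R] [CommSemiring A] [Algebra R A]
    [AddCommMonoid M] [Module A M] [Module R M] [Fintype σ] (d : Derivation R A M) (a : σ → A)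
    (D : MvPolynomial σ R) : d (aeval a D) = ∑ i, aeval a (pderiv i D) • d (a i) := by
  classical
  induction D using MvPolynomial.induction_on with
  | C c => simp [← algebraMap_eq]
  | add f g hf hg => simp [hf, hg, add_smul, Finset.sum_add_distrib]
  | mul_X f j hf =>
    simp [hf, pderiv_X, Pi.single_apply, add_smul, mul_smul, Finset.sum_add_distrib,
      Finset.smul_sum, apply_ite, ite_smul]

theorem add_single_mem_support_of_mem_support_pderiv [CommSemiring R] {i : σ}
    {f : MvPolynomial σ R} {m : σ →₀ ℕ} (hm : m ∈ (pderiv i f).support) :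
    m + Finsupp.single i 1 ∈ f.support := by
  rw [mem_support_iff, coeff_pderiv] at hm
  exact mem_support_iff.2 (left_ne_zero_of_mul hm)

theorem totalDegree_pderiv_lt [CommSemiring R] {i : σ} {f : MvPolynomial σ R}
    (hf : pderiv i f ≠ 0) : (pderiv i f).totalDegree < f.totalDegree := by
  have degree_lt : ∀ m ∈ (pderiv i f).support, m.degree < f.totalDegree := fun m hm => by
    have := le_totalDegree (add_single_mem_support_of_mem_support_pderiv hm)
    change (m + Finsupp.single i 1).degree ≤ _ at this
    rw [map_add, Finsupp.degree_single] at this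
    omega
  obtain ⟨m, hm⟩ := support_nonempty.2 hf
  exact (Finset.sup_lt_iff ((Nat.zero_le _).trans_lt (degree_lt m hm))).2 degree_lt

theorem pderiv_ne_zero_of_mem_support [CommSemiring R] [NoZeroDivisors R] {i : σ}
    {f : MvPolynomial σ R} {m : σ →₀ ℕ} (hm : m ∈ f.support) (hi : (m i : R) ≠ 0) :
    pderiv i f ≠ 0 := by
  have pos : 1 ≤ m i := Nat.one_le_iff_ne_zero.2 fun h => hi (by simp [h])
  have cancel : m - Finsupp.single i 1 + Finsupp.single i 1 = m :=
    tsub_add_cancel_of_le (by simpa using pos)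
  refine fun h => mul_ne_zero (mem_support_iff.1 hm) hi ?_
  have := congrArg (coeff (m - Finsupp.single i 1)) h
  rwa [coeff_pderiv, cancel, coeff_zero, Finsupp.tsub_apply, Finsupp.single_eq_same,
    ← Nat.cast_add_one, Nat.sub_add_cancel pos] at this

variable {K : Type*} [Field K]

theorem exists_mem_support_natCast_ne_zero [PerfectField K] {L : Type*} [Field L] [Algebra K L]
    {a : σ → L} {D : MvPolynomial σ K} (hD₀ : D ≠ 0) (hD : aeval a D = 0)
    (hmin : ∀ D' : MvPolynomial σ K, D' ≠ 0 → aeval a D' = 0 → D.totalDegree ≤ D'.totalDegree) :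
    ∃ i, ∃ m ∈ D.support, (m i : K) ≠ 0 := by
  obtain _ | ⟨p, hp, _⟩ := CharP.exists' K
  · by_contra! h
    have const := totalDegree_eq_zero_iff_eq_C.1
      ((totalDegree_eq_zero_iff _ D).2 fun m hm i => Nat.cast_eq_zero.1 (h i m hm))
    rw [const, aeval_C, map_eq_zero] at hD
    exact hD₀ (by rw [const, hD, C_0])
  · have : ExpChar K p := .prime hp.out
    have : CharP L p := .of_ringHom_of_ne_zero (algebraMap K L) p hp.out.ne_zero
    simp only [Ne, CharP.cast_eq_zero_iff K p]
    refine exists_mem_support_not_dvd_of_forall_totalDegree_le p hp.out (fun s hs => ?_)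
      hmin hD₀ hD
    refine hs.map_of_injective_injective (frobeniusEquiv K p).symm (frobenius L p).toAddMonoidHom
      (by simp) (by simp [frobenius]) fun r x => ?_
    change (_ • x) ^ p = r • x ^ p
    rw [smul_pow, frobeniusEquiv_symm_pow_p]

theorem exists_aeval_eq_zero_aeval_pderiv_ne_zero [PerfectField K] {B : Type*} [CommRing B]
    [IsDomain B] [Algebra K B] {a : σ → B} (ha : ¬ AlgebraicIndependent K a) :
    ∃ D : MvPolynomial σ K, aeval a D = 0 ∧ ∃ i, aeval a (pderiv i D) ≠ 0 := by
  let relations := {D : MvPolynomial σ K | D ≠ 0 ∧ aeval a D = 0}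
  have nonempty : relations.Nonempty := by
    simpa [relations, Set.Nonempty, algebraicIndependent_iff, and_comm] using ha
  set D := totalDegree.argminOn relations nonempty
  obtain ⟨hD₀, hD⟩ : D ∈ relations := totalDegree.argminOn_mem ..
  have hmin : ∀ D' : MvPolynomial σ K, D' ≠ 0 → aeval a D' = 0 →
      D.totalDegree ≤ D'.totalDegree :=
    fun _ h₀ h => totalDegree.argminOn_le relations ⟨h₀, h⟩
  obtain ⟨i, m, hm, hi⟩ := exists_mem_support_natCast_ne_zero (L := FractionRing B)
    (a := algebraMap B (FractionRing B) ∘ a) hD₀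
    ((aeval_algebraMap_apply ..).trans (by rw [hD, map_zero]))
    fun D' h₀ h => hmin D' h₀ ((aeval_algebraMap_eq_zero_iff ..).1 h)
  have pderiv_ne_zero := pderiv_ne_zero_of_mem_support hm hi
  exact ⟨D, hD, i, fun h =>
    (totalDegree_pderiv_lt pderiv_ne_zero).not_ge (hmin _ pderiv_ne_zero h)⟩

end Relations

section Fractions

/-- The subalgebra of an `R`-algebra `A` formed by the fractions of elements of the image of `R`,
that is, `A ∩ Q(R′)` inside `Q(A)`, where `R′` is that image. -/
def fractionSubalgebra (R A : Type*) [CommRing R] [CommRing A] [IsDomain A] [Algebra R A] :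
    Subalgebra R A where
  carrier := {x | ∃ r s : R, algebraMap R A s ≠ 0 ∧ algebraMap R A s * x = algebraMap R A r}
  mul_mem' := by
    rintro x y ⟨r, s, hs, hx⟩ ⟨r', s', hs', hy⟩
    refine ⟨r * r', s * s', by rw [map_mul]; exact mul_ne_zero hs hs', ?_⟩
    rw [map_mul, map_mul, mul_mul_mul_comm, hx, hy]
  add_mem' := by
    rintro x y ⟨r, s, hs, hx⟩ ⟨r', s', hs', hy⟩
    refine ⟨r * s' + r' * s, s * s', by rw [map_mul]; exact mul_ne_zero hs hs', ?_⟩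
    simp only [map_mul, map_add, ← hx, ← hy]
    ring
  algebraMap_mem' r := ⟨r, 1, by simp, by simp⟩

theorem fractionSubalgebra_quotient_eq_top {R ι : Type*} [CommRing R]
    {I : Ideal (MvPolynomial ι R)} [I.IsPrime]
    (h : ∀ i, Ideal.Quotient.mk I (X i) ∈ fractionSubalgebra R (MvPolynomial ι R ⧸ I)) :
    fractionSubalgebra R (MvPolynomial ι R ⧸ I) = ⊤ := by
  rw [← top_le_iff, ← (AlgHom.range_eq_top _).2 (Ideal.Quotient.mkₐ_surjective R I),
    ← Algebra.map_top, ← adjoin_range_X, AlgHom.map_adjoin, Algebra.adjoin_le_iff,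
    ← Set.range_comp]
  exact Set.range_subset_iff.2 h

end Fractions

section GenericSingularPoint

/-- The ideal generated by a polynomial and its partial derivatives, whose zeros are the singular
points of the hypersurface `F = 0`. -/
noncomputable def singularIdeal {ι R : Type*} [CommRing R] (F : MvPolynomial ι R) :
    Ideal (MvPolynomial ι R) :=
  Ideal.span (insert F (Set.range fun i => pderiv i F))

theorem singularIdeal_fin_two {R : Type*} [CommRing R] (F : MvPolynomial (Fin 2) R) :
    singularIdeal F = Ideal.span {F, pderiv 0 F, pderiv 1 F} := by
  rw [singularIdeal]
  congr 2
  ext g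
  simp [Fin.exists_fin_two, eq_comm]

variable {ι τ σ K : Type*} [CommRing K]

section Family

variable (e : Option ι ⊕ τ ≃ σ)

/-- The inclusion of the polynomial ring in the coordinates `ι` and the parameters `τ` into the
polynomial ring over all parameters `σ`, where `e` splits `σ` into `Option ι` and `τ`. -/
noncomputable def includeParams :
    MvPolynomial (ι ⊕ τ) K →ₐ[K] MvPolynomial ι (MvPolynomial σ K) :=
  aeval (Sum.elim X (C ∘ fun j => X (e (.inr j))))

@[simp]
theorem includeParams_X_inl (i : ι) : includeParams (K := K) e (X (.inl i)) = X i := by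
  simp [includeParams]

@[simp]
theorem includeParams_X_inr (j : τ) :
    includeParams (K := K) e (X (.inr j)) = C (X (e (.inr j))) := by
  simp [includeParams]

theorem pderiv_includeParams (g : MvPolynomial (ι ⊕ τ) K) (i : ι) :
    pderiv i (includeParams e g) = includeParams e (pderiv (.inl i) g) :=
  (aeval_sumElim_pderiv_inl g (fun j => X (e (.inr j))) i).symm

variable [Fintype ι] (f : MvPolynomial (ι ⊕ τ) K)

/-- The family `f + A₀ + ∑ i, Aᵢ xᵢ` of polynomials in the coordinates `xᵢ`, where `A₀` is the
parameter `e (.inl none)` and `Aᵢ` is the parameter `e (.inl (some i))`. -/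
noncomputable def affineFamily : MvPolynomial ι (MvPolynomial σ K) :=
  includeParams e f + C (X (e (.inl none))) + ∑ i, C (X (e (.inl (some i)))) * X i

theorem pderiv_affineFamily (i : ι) : pderiv i (affineFamily e f) =
    includeParams e (pderiv (.inl i) f) + C (X (e (.inl (some i)))) := by
  classical
  simp [affineFamily, pderiv_includeParams, pderiv_X, Pi.single_apply]

/-- The parameters of the member of `affineFamily` that is singular at the point `x`, as functions
of `x` and of the parameters in `τ`: solving `F = 0` and `∂F/∂xᵢ = 0` gives `Aᵢ = -∂f/∂xᵢ`, and
`A₀` is the Legendre transform of `f`. -/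
noncomputable def singularParam : Option ι ⊕ τ → MvPolynomial (ι ⊕ τ) K
  | .inl none => ∑ i, X (.inl i) * pderiv (.inl i) f - f
  | .inl (some i) => -pderiv (.inl i) f
  | .inr j => X (.inr j)

/-- Evaluation of a polynomial of the family at the generic singular point. -/
noncomputable def evalSingular :
    MvPolynomial ι (MvPolynomial σ K) →ₐ[K] MvPolynomial (ι ⊕ τ) K :=
  aevalTower (aeval (singularParam f ∘ e.symm)) (X ∘ Sum.inl)

@[simp]
theorem evalSingular_X (i : ι) : evalSingular e f (X i) = X (.inl i) :=
  aevalTower_X ..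

@[simp]
theorem evalSingular_C_X (t : Option ι ⊕ τ) :
    evalSingular e f (C (X (e t))) = singularParam f t := by
  simp [evalSingular]

theorem evalSingular_C_rename (D : MvPolynomial (Option ι ⊕ τ) K) :
    evalSingular e f (C (rename e D)) = aeval (singularParam f) D := by
  rw [evalSingular, aevalTower_C, aeval_rename, Function.comp_assoc, e.symm_comp_self,
    Function.comp_id]

@[simp]
theorem evalSingular_includeParams (g : MvPolynomial (ι ⊕ τ) K) :
    evalSingular e f (includeParams e g) = g := by
  suffices (evalSingular e f).comp (includeParams e) = AlgHom.id K _ from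
    AlgHom.congr_fun this g
  ext (i | j) : 1 <;> simp [singularParam]

theorem singularIdeal_affineFamily_le_ker :
    singularIdeal (affineFamily e f) ≤ RingHom.ker (evalSingular e f) := by
  rw [singularIdeal, Ideal.span_le, Set.insert_subset_iff, Set.range_subset_iff]
  simp only [SetLike.mem_coe, RingHom.mem_ker, pderiv_affineFamily]
  constructor
  · simp [affineFamily, singularParam, mul_comm]
  · simp [singularParam]

theorem includeParams_singularParam_sub_mem (t : Option ι ⊕ τ) :
    includeParams e (singularParam f t) - C (X (e t)) ∈ singularIdeal (affineFamily e f) := by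
  have family_mem : affineFamily e f ∈ singularIdeal (affineFamily e f) :=
    Ideal.subset_span (Set.mem_insert ..)
  have pderiv_mem (i : ι) : pderiv i (affineFamily e f) ∈ singularIdeal (affineFamily e f) :=
    Ideal.subset_span (Set.mem_insert_of_mem _ ⟨i, rfl⟩)
  rcases t with (_ | i) | j
  · convert sub_mem (sum_mem (t := Finset.univ)
      fun i _ => Ideal.mul_mem_left _ (X i) (pderiv_mem i)) family_mem using 1
    simp only [pderiv_affineFamily, mul_add, Finset.sum_add_distrib]
    simp only [affineFamily, singularParam, map_sub, map_sum, map_mul, includeParams_X_inl,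
      mul_comm (C _)]
    ring
  · convert neg_mem (pderiv_mem i) using 1
    simp [singularParam, pderiv_affineFamily, sub_eq_add_neg, add_comm]
  · simp [singularParam]

theorem includeParams_evalSingular_sub_mem (g : MvPolynomial ι (MvPolynomial σ K)) :
    includeParams e (evalSingular e f g) - g ∈ singularIdeal (affineFamily e f) := by
  set I := singularIdeal (affineFamily e f)
  suffices ((Ideal.Quotient.mkₐ K I).comp (includeParams e)).comp (evalSingular e f) =
      Ideal.Quotient.mkₐ K I from
    Ideal.Quotient.eq.1 (AlgHom.congr_fun this g)
  refine algHom_ext' (algHom_ext fun s => ?_) fun i => ?_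
  · obtain ⟨t, rfl⟩ := e.surjective s
    simpa [algebraMap_eq] using Ideal.Quotient.eq.2 (includeParams_singularParam_sub_mem e f t)
  · simp

theorem singularIdeal_affineFamily :
    singularIdeal (affineFamily e f) = RingHom.ker (evalSingular e f) := by
  refine (singularIdeal_affineFamily_le_ker e f).antisymm fun g hg => ?_
  have := includeParams_evalSingular_sub_mem e f g
  rwa [RingHom.mem_ker.1 hg, map_zero, zero_sub, neg_mem_iff] at this

instance singularIdeal_affineFamily_isPrime [IsDomain K] :
    (singularIdeal (affineFamily e f)).IsPrime :=
  singularIdeal_affineFamily e f ▸ RingHom.ker_isPrime _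

end Family


section Duality

/-- The Hessian matrix of `f` with respect to the coordinates `ι`. -/
noncomputable def coordHessian (f : MvPolynomial (ι ⊕ τ) K) :
    Matrix ι ι (MvPolynomial (ι ⊕ τ) K) :=
  .of fun i j => pderiv (.inl i) (pderiv (.inl j) f)

variable [Fintype ι] {f : MvPolynomial (ι ⊕ τ) K}

theorem pderiv_inl_singularParam_none (i : ι) : pderiv (.inl i) (singularParam f (.inl none)) =
    ∑ j, coordHessian f i j * X (.inl j) := by
  classical
  simp [singularParam, coordHessian, pderiv_X, Pi.single_apply, Finset.sum_add_distrib, mul_comm]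

variable {D : MvPolynomial (Option ι ⊕ τ) K}

theorem sum_aeval_pderiv_mul_pderiv_singularParam [Fintype τ]
    (hD : aeval (singularParam f) D = 0) (s : ι ⊕ τ) :
    ∑ t, aeval (singularParam f) (pderiv t D) * pderiv s (singularParam f t) = 0 := by
  rw [← map_zero (pderiv s), ← hD, derivation_aeval]
  simp only [smul_eq_mul]

variable [Finite τ]

theorem coordHessian_mulVec_eq_zero (hD : aeval (singularParam f) D = 0) :
    (coordHessian f).mulVec (fun i =>
      X (.inl i) * aeval (singularParam f) (pderiv (.inl none) D) -
        aeval (singularParam f) (pderiv (.inl (some i)) D)) = 0 := by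
  cases nonempty_fintype τ
  ext1 i
  have chain_rule := sum_aeval_pderiv_mul_pderiv_singularParam hD (.inl i)
  rw [Fintype.sum_sum_type, Fintype.sum_option, pderiv_inl_singularParam_none] at chain_rule
  have some_eq (j : ι) : pderiv (.inl i) (singularParam f (.inl (some j))) =
      -coordHessian f i j := by simp [singularParam, coordHessian]
  have inr_eq (j : τ) : pderiv (.inl i) (singularParam f (.inr j)) = 0 := by simp [singularParam]
  simp only [some_eq, inr_eq, mul_zero, Finset.sum_const_zero, add_zero, mul_neg,
    Finset.sum_neg_distrib, ← sub_eq_add_neg, Finset.mul_sum, ← Finset.sum_sub_distrib]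
    at chain_rule
  rw [Pi.zero_apply, ← chain_rule, Matrix.mulVec, dotProduct]
  exact Finset.sum_congr rfl fun _ _ => by ring

variable [IsDomain K] [DecidableEq ι]

theorem aeval_pderiv_some_eq (hf : (coordHessian f).det ≠ 0) (hD : aeval (singularParam f) D = 0)
    (i : ι) : aeval (singularParam f) (pderiv (.inl (some i)) D) =
      X (.inl i) * aeval (singularParam f) (pderiv (.inl none) D) :=
  (sub_eq_zero.1 (congrFun
    (Matrix.eq_zero_of_mulVec_eq_zero hf (coordHessian_mulVec_eq_zero hD)) i)).symm

theorem aeval_pderiv_none_ne_zero (hf : (coordHessian f).det ≠ 0)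
    (hD : aeval (singularParam f) D = 0) (hD' : ∃ t, aeval (singularParam f) (pderiv t D) ≠ 0) :
    aeval (singularParam f) (pderiv (.inl none) D) ≠ 0 := by
  classical
  cases nonempty_fintype τ
  intro none_eq
  have some_eq (i : ι) : aeval (singularParam f) (pderiv (.inl (some i)) D) = 0 := by
    rw [aeval_pderiv_some_eq hf hD, none_eq, mul_zero]
  obtain ⟨(_ | i) | j, ht⟩ := hD'
  · exact ht none_eq
  · exact ht (some_eq i)
  · have chain_rule := sum_aeval_pderiv_mul_pderiv_singularParam hD (.inr j)
    simp only [Fintype.sum_sum_type, Fintype.sum_option, none_eq, some_eq, zero_mul,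
      Finset.sum_const_zero, zero_add, singularParam, pderiv_X, Pi.single_apply, Sum.inr.injEq,
      mul_ite, mul_one, mul_zero, Finset.sum_ite_eq', Finset.mem_univ, if_true] at chain_rule
    exact ht chain_rule

end Duality

end GenericSingularPoint

section FractionField

variable {ι τ σ K : Type*} [Field K] [Fintype ι] [Finite τ]

theorem not_algebraicIndependent_singularParam (f : MvPolynomial (ι ⊕ τ) K) :
    ¬ AlgebraicIndependent K (singularParam f) := by
  cases nonempty_fintype τ
  intro h
  have card_le := h.lift_cardinalMk_le_trdeg
  simp only [trdeg_of_isDomain, Cardinal.mk_fintype, Cardinal.lift_natCast, Nat.cast_le,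
    Fintype.card_sum, Fintype.card_option] at card_le
  omega

variable [PerfectField K] [DecidableEq ι]

theorem fractionSubalgebra_quotient_singularIdeal_affineFamily (e : Option ι ⊕ τ ≃ σ)
    {f : MvPolynomial (ι ⊕ τ) K} (hf : (coordHessian f).det ≠ 0) :
    fractionSubalgebra (MvPolynomial σ K)
      (MvPolynomial ι (MvPolynomial σ K) ⧸ singularIdeal (affineFamily e f)) = ⊤ := by
  obtain ⟨D, hD, hD'⟩ := exists_aeval_eq_zero_aeval_pderiv_ne_zero
    (not_algebraicIndependent_singularParam f)
  have algebraMap_eq (r : MvPolynomial σ K) : algebraMap _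
      (MvPolynomial ι (MvPolynomial σ K) ⧸ singularIdeal (affineFamily e f)) r =
        Ideal.Quotient.mk _ (C r) := rfl
  refine fractionSubalgebra_quotient_eq_top fun i =>
    ⟨rename e (pderiv (.inl (some i)) D), rename e (pderiv (.inl none) D), ?_, ?_⟩
  · rw [algebraMap_eq, Ne, Ideal.Quotient.eq_zero_iff_mem, singularIdeal_affineFamily,
      RingHom.mem_ker, evalSingular_C_rename]
    exact aeval_pderiv_none_ne_zero hf hD hD'
  · rw [algebraMap_eq, algebraMap_eq, ← map_mul, Ideal.Quotient.eq, singularIdeal_affineFamily,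
      RingHom.mem_ker, map_sub, map_mul, evalSingular_X, evalSingular_C_rename,
      evalSingular_C_rename, aeval_pderiv_some_eq hf hD, mul_comm, sub_self]

end FractionField

section Weierstrass

variable {p q : ℕ}

theorem mem_idxSet_of_le_one (h : p + q < p * q) {t : ℕ × ℕ} (h₁ : t.1 ≤ 1) (h₂ : t.2 ≤ 1) :
    t ∈ idxSet p q := by
  have hp : 1 < p := by by_contra!; interval_cases p <;> omega
  have hq : 1 < q := by by_contra!; interval_cases q <;> omega
  simp only [idxSet, Finset.mem_filter, Finset.mem_product, Finset.mem_range]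
  refine ⟨⟨by omega, by omega⟩, lt_of_le_of_lt ?_ h⟩
  exact add_le_add (mul_le_of_le_one_left' h₁) (mul_le_of_le_one_left' h₂)

/-- The exponents of the monomials `1`, `X`, `Y`. -/
def affineExponent : Option (Fin 2) → ℕ × ℕ
  | none => (0, 0)
  | some 0 => (1, 0)
  | some 1 => (0, 1)

theorem affineExponent_injective : Function.Injective affineExponent := by
  decide

/-- `affineExponent` as an embedding into the index set `I`; the bound on `p` and `q` says that
also the exponent `(1, 1)` of `X Y` is in `I`. -/
def affineIdx (h : p + q < p * q) : Option (Fin 2) ↪ idxSet p q where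
  toFun o := ⟨affineExponent o, mem_idxSet_of_le_one h (by decide +revert) (by decide +revert)⟩
  inj' _ _ ho := affineExponent_injective (congrArg Subtype.val ho)

/-- The indices in `I` other than the exponents of `1`, `X`, `Y`. -/
abbrev nonaffineIdx (h : p + q < p * q) : Set (idxSet p q) :=
  (Set.range (affineIdx h))ᶜ

/-- The splitting of the index set `I` into the exponents of `1`, `X`, `Y` and the others. -/
noncomputable def idxEquiv (h : p + q < p * q) : Option (Fin 2) ⊕ nonaffineIdx h ≃ idxSet p q :=
  open scoped Classical in
  ((Equiv.ofInjective _ (affineIdx h).injective).sumCongr (Equiv.refl _)).trans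
    (Equiv.Set.sumCompl _)

theorem coe_idxEquiv_inl (h : p + q < p * q) (o : Option (Fin 2)) :
    (idxEquiv h (.inl o) : ℕ × ℕ) = affineExponent o :=
  rfl

theorem idxEquiv_inr (h : p + q < p * q) (j : nonaffineIdx h) : idxEquiv h (.inr j) = j :=
  rfl

variable (K : Type) [Field K]

/-- The part of the generic Weierstraß polynomial other than its terms in `1`, `X`, `Y`, with its
parameters taken as variables alongside `X` and `Y`. -/
noncomputable def weierstrassTail (h : p + q < p * q) :
    MvPolynomial (Fin 2 ⊕ nonaffineIdx h) K :=
  X (.inl 1) ^ p - X (.inl 0) ^ q +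
    ∑ j : nonaffineIdx h, X (.inr j) * X (.inl 0) ^ j.1.1.1 * X (.inl 1) ^ j.1.1.2

theorem genF_eq_affineFamily (h : p + q < p * q) :
    genF K p q = affineFamily (idxEquiv h) (weierstrassTail K h) := by
  rw [genF, ← (idxEquiv h).sum_comp, Fintype.sum_sum_type, Fintype.sum_option]
  simp only [affineFamily, weierstrassTail, map_add, map_sub, map_sum, map_mul, map_pow,
    includeParams_X_inl, includeParams_X_inr, coe_idxEquiv_inl, affineExponent, Fin.sum_univ_two,
    idxEquiv_inr, pow_zero, pow_one, mul_one]
  ring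

theorem det_coordHessian_weierstrassTail_ne_zero (h : p + q < p * q) :
    (coordHessian (weierstrassTail K h)).det ≠ 0 := by
  classical
  let xy : nonaffineIdx h := ⟨⟨(1, 1), mem_idxSet_of_le_one h le_rfl le_rfl⟩, by
    rintro ⟨o, ho⟩
    exact (by decide : ∀ o, affineExponent o ≠ (1, 1)) o (congrArg Subtype.val ho)⟩
  let params : nonaffineIdx h → K := Pi.single xy 1
  let φ : MvPolynomial (Fin 2 ⊕ nonaffineIdx h) K →ₐ[K] MvPolynomial (Fin 2) K :=
    aeval (Sum.elim X (C ∘ params))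
  have specialization : φ (weierstrassTail K h) = X 1 ^ p - X 0 ^ q + X 0 * X 1 := by
    simp only [φ, weierstrassTail, map_add, map_sub, map_sum, map_mul, map_pow, aeval_X,
      Sum.elim_inl, Sum.elim_inr, Function.comp_apply, params]
    rw [Finset.sum_eq_single xy (fun j _ hj => by simp [hj]) (by simp)]
    simp [xy]
  have φ_pderiv (i : Fin 2) (g) : φ (pderiv (.inl i) g) = pderiv i (φ g) :=
    aeval_sumElim_pderiv_inl g params i
  intro det_eq
  have eval_det := congrArg (fun g => eval 0 (φ g)) det_eq
  have exponent_ne : p - 1 - 1 ≠ 0 ∨ q - 1 - 1 ≠ 0 := by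
    by_contra!
    nlinarith [show p ≤ 2 by omega, show q ≤ 2 by omega]
  rcases exponent_ne with hne | hne <;>
    simp [Matrix.det_fin_two, coordHessian, φ_pderiv, specialization, pderiv_X, hne] at eval_det

end Weierstrass

theorem quotient_field_of_A_equals_quotient_field_of_R_general (K : Type) [Field K]
    [PerfectField K] (p q : ℕ) (h : p + q < p * q) :
    IsDomain (genRing K p q ⧸
        Ideal.span {genF K p q, pderiv 0 (genF K p q), pderiv 1 (genF K p q)}) ∧
    ∀ x : genRing K p q ⧸
        Ideal.span {genF K p q, pderiv 0 (genF K p q), pderiv 1 (genF K p q)},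
      ∃ r s : coefRing K p q,
        algebraMap (coefRing K p q) (genRing K p q ⧸
          Ideal.span {genF K p q, pderiv 0 (genF K p q), pderiv 1 (genF K p q)}) s ≠ 0 ∧
        algebraMap (coefRing K p q) (genRing K p q ⧸
          Ideal.span {genF K p q, pderiv 0 (genF K p q), pderiv 1 (genF K p q)}) s * x =
        algebraMap (coefRing K p q) (genRing K p q ⧸
          Ideal.span {genF K p q, pderiv 0 (genF K p q), pderiv 1 (genF K p q)}) r := by
  rw [← singularIdeal_fin_two, genF_eq_affineFamily K h]
  refine ⟨inferInstance, fun x => ?_⟩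
  change x ∈ fractionSubalgebra _ _
  rw [fractionSubalgebra_quotient_singularIdeal_affineFamily _
    (det_coordHessian_weierstrassTail_ne_zero K h)]
  exact Algebra.mem_top

/-- **Proposition 1.4.** `A = R[X,Y]/(F, F_X, F_Y)` is a domain and every element of `A`
becomes, after multiplication by a suitable nonzero element of the image `R′` of `R`,
an element of `R′`; i.e. `Q(R′) = Q(A)`. -/
theorem quotient_field_of_A_equals_quotient_field_of_R
    (K : Type) [Field K] [IsAlgClosed K] [CharZero K]
    (p q : ℕ) (hp : 1 < p) (hpq : p < q) (hco : Nat.Coprime p q) :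
    IsDomain (genRing K p q ⧸
        Ideal.span {genF K p q, pderiv 0 (genF K p q), pderiv 1 (genF K p q)}) ∧
    ∀ x : genRing K p q ⧸
        Ideal.span {genF K p q, pderiv 0 (genF K p q), pderiv 1 (genF K p q)},
      ∃ r s : coefRing K p q,
        algebraMap (coefRing K p q) (genRing K p q ⧸
          Ideal.span {genF K p q, pderiv 0 (genF K p q), pderiv 1 (genF K p q)}) s ≠ 0 ∧
        algebraMap (coefRing K p q) (genRing K p q ⧸
          Ideal.span {genF K p q, pderiv 0 (genF K p q), pderiv 1 (genF K p q)}) s * x =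
        algebraMap (coefRing K p q) (genRing K p q ⧸
          Ideal.span {genF K p q, pderiv 0 (genF K p q), pderiv 1 (genF K p q)}) r := by
  exact quotient_field_of_A_equals_quotient_field_of_R_general K p q (by nlinarith)
end

section
/- Let α = (a_{νμ}) ∈ K^I be such that C_α is a nodal curve with exactly l ≥ 1 nodes (ξ_1,η_1),…,(ξ_l,η_l). Expand Δ as a polynomial in the shifted variables T_{νμ} = A_{νμ} − a_{νμ}. Then the nonzero homogeneous component of lowest degree of this expansion has degree l and is equal to e·∏_{i=1}^{l} L_i for some e ∈ K∖{0}, where L_i = Σ_{(ν,μ)∈I} ξ_i^ν η_i^μ T_{νμ}; moreover the linear forms L_1,…,L_l are linearly independent over K. -/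
open MvPolynomial

set_option synthInstance.maxHeartbeats 1000000
set_option maxHeartbeats 1000000

/-- The determinant `Δ ∈ R` of the `R`-linear endomorphism of `N = R[X,Y]/(F_X, F_Y)`
given by multiplication by the residue class of `F`. -/
noncomputable def genDelta (K : Type) [Field K] (p q : ℕ) : coefRing K p q :=
  LinearMap.det
    (LinearMap.mul (coefRing K p q)
      (genRing K p q ⧸ Ideal.span {pderiv 0 (genF K p q), pderiv 1 (genF K p q)})
      (Ideal.Quotient.mk (Ideal.span {pderiv 0 (genF K p q), pderiv 1 (genF K p q)})
        (genF K p q)))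

/-- The normed Weierstraß polynomial `F_a = Y^p − X^q + Σ a_νμ X^ν Y^μ ∈ K[X,Y]`. -/
noncomputable def wPoly (K : Type) [CommRing K] (p q : ℕ) (a : idxSet p q → K) :
    MvPolynomial (Fin 2) K :=
  X 1 ^ p - X 0 ^ q + ∑ i : idxSet p q, C (a i) * X 0 ^ (i : ℕ × ℕ).1 * X 1 ^ (i : ℕ × ℕ).2

/-- `P` is a singular point of the curve `G = 0`. -/
def IsSingAt (K : Type) [CommRing K] (G : MvPolynomial (Fin 2) K) (P : K × K) : Prop :=
  eval ![P.1, P.2] G = 0 ∧ eval ![P.1, P.2] (pderiv 0 G) = 0 ∧ eval ![P.1, P.2] (pderiv 1 G) = 0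


/-- The Hessian determinant `G_{XX} G_{YY} − G_{XY}²` of a polynomial in `X, Y`. -/
noncomputable def hessPoly (K : Type) [CommRing K] (G : MvPolynomial (Fin 2) K) :
    MvPolynomial (Fin 2) K :=
  pderiv 0 (pderiv 0 G) * pderiv 1 (pderiv 1 G) - (pderiv 0 (pderiv 1 G)) ^ 2

/-- `P` is a node of the curve `G = 0`. -/
def IsNodeAt (K : Type) [CommRing K] (G : MvPolynomial (Fin 2) K) (P : K × K) : Prop :=
  IsSingAt K G P ∧ eval ![P.1, P.2] (hessPoly K G) ≠ 0

/-- The linear form `L = Σ_{(ν,μ) ∈ I} ξ^ν η^μ T_νμ` attached to a point `(ξ,η)`. -/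
noncomputable def nodeLinForm (K : Type) [Field K] (p q : ℕ) (ξ η : K) : coefRing K p q :=
  ∑ j : idxSet p q, C (ξ ^ (j : ℕ × ℕ).1 * η ^ (j : ℕ × ℕ).2) * X j

/-!
Restrict `Δ` to a line `a + T t`. It becomes the determinant of a matrix over `K[T]`, that of
multiplication by `F` in the monomial basis of the Jacobian ring. At `T = 0` its kernel and
cokernel have dimension `l`: the evaluations at the nodes annihilate the image, and the idempotents
of the nodes span the kernel. So `T ^ l` divides the determinant, and up to a nonzero constant the
coefficient of `T ^ l` is the determinant of the derivative of the matrix between these two spaces.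
This `l × l` matrix is diagonal with entries `L_i(t)`.

A linear relation `∑ c_i L_i = 0` says that the functional `ψ = ∑ c_i ev_{P_i}` on the Jacobian ring
of `G = F_a` kills all monomials of weight less than `pq`, where `X` has weight `p` and `Y` has
weight `q`. It also kills the multiples of `G`. The top coefficient of the normal form defines a
perfect pairing on the Jacobian ring, and `ψ` is the pairing with some `r` of weight at most
`pq - 2p - 2q` such that `G r = u G_X + v G_Y`. At a node, comparing the derivatives of both sides
shows that `u` and `v` vanish, so by the Nullstellensatz both lie in the ideal `(G_X, G_Y, G)`.
But `u` has a smaller pole than `G_Y` at the single place at infinity of the curve, and this forces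
`u = v = 0`, hence `r = 0` and all `c_i = 0`.
-/

section WeightFiltration

variable {σ R S : Type*} [CommRing R] [CommRing S] {w : σ → ℤ} {m n : ℤ} {f g : MvPolynomial σ R}

/-- The polynomials all of whose monomials have `w`-weight at most `n`. Weights are integers, so
that bounds may be subtracted freely; for nonnegative weights a negative bound leaves only `0`. -/
noncomputable def weightLE (w : σ → ℤ) (n : ℤ) : Submodule R (MvPolynomial σ R) :=
  restrictSupport R {d | Finsupp.weight w d ≤ n}

theorem mem_restrictSupport_iff_coeff {s : Set (σ →₀ ℕ)} :
    f ∈ restrictSupport R s ↔ ∀ d, coeff d f ≠ 0 → d ∈ s := by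
  simp only [mem_restrictSupport_iff, Set.subset_def, Finset.mem_coe, mem_support_iff]

theorem coeff_eq_zero_of_mem_restrictSupport {s : Set (σ →₀ ℕ)} {d : σ →₀ ℕ}
    (hf : f ∈ restrictSupport R s) (hd : d ∉ s) : coeff d f = 0 :=
  not_not.1 fun h => hd (mem_restrictSupport_iff_coeff.1 hf d h)

theorem map_mem_restrictSupport (φ : R →+* S) {s : Set (σ →₀ ℕ)} (hf : f ∈ restrictSupport R s) :
    map φ f ∈ restrictSupport S s := by
  refine mem_restrictSupport_iff_coeff.2 fun d hd => mem_restrictSupport_iff_coeff.1 hf d ?_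
  rw [coeff_map] at hd
  exact fun h => hd (by rw [h, map_zero])

theorem mul_X_pow_mem_restrictSupport {s t : Set (σ →₀ ℕ)} {i : σ} {k : ℕ} (c : R)
    (hf : f ∈ restrictSupport R s) (h : ∀ d ∈ s, d + Finsupp.single i k ∈ t) :
    f * (C c * X i ^ k) ∈ restrictSupport R t := by
  classical
  refine mem_restrictSupport_iff_coeff.2 fun d hd => ?_
  rw [C_mul_X_pow_eq_monomial, coeff_mul_monomial'] at hd
  split_ifs at hd with hle
  · simpa [tsub_add_cancel_of_le hle] using
      h _ (mem_restrictSupport_iff_coeff.1 hf _ (left_ne_zero_of_mul hd))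
  · exact absurd rfl hd

theorem mem_restrictSupport_left_of_add_mem {s t u : Set (σ →₀ ℕ)} (hst : Disjoint s t)
    (hf : f ∈ restrictSupport R s) (hg : g ∈ restrictSupport R t)
    (hfg : f + g ∈ restrictSupport R u) : f ∈ restrictSupport R u := by
  refine mem_restrictSupport_iff_coeff.2 fun d hd => mem_restrictSupport_iff_coeff.1 hfg d ?_
  have hds := mem_restrictSupport_iff_coeff.1 hf d hd
  rwa [coeff_add, coeff_eq_zero_of_mem_restrictSupport hg (hst.notMem_of_mem_left hds), add_zero]

theorem mem_restrictSupport_of_add_add_mem {s t u v : Set (σ →₀ ℕ)} {h : MvPolynomial σ R}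
    (hst : Disjoint s t) (hsu : Disjoint s u) (htu : Disjoint t u)
    (hf : f ∈ restrictSupport R s) (hg : g ∈ restrictSupport R t) (hh : h ∈ restrictSupport R u)
    (hfgh : f + g + h ∈ restrictSupport R v) :
    f ∈ restrictSupport R v ∧ g ∈ restrictSupport R v ∧ h ∈ restrictSupport R v := by
  have hfg : f + g ∈ restrictSupport R v :=
    mem_restrictSupport_left_of_add_mem (hsu.union_left htu)
      (add_mem (restrictSupport_mono R Set.subset_union_left hf)
        (restrictSupport_mono R Set.subset_union_right hg)) hh hfgh
  refine ⟨mem_restrictSupport_left_of_add_mem hst hf hg hfg,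
    mem_restrictSupport_left_of_add_mem hst.symm hg hf (by rwa [add_comm]), ?_⟩
  simpa using sub_mem hfgh hfg

theorem mem_weightLE : f ∈ weightLE w n ↔ ∀ d, coeff d f ≠ 0 → Finsupp.weight w d ≤ n :=
  mem_restrictSupport_iff_coeff

theorem weightLE_mono (h : m ≤ n) : weightLE (R := R) w m ≤ weightLE w n :=
  restrictSupport_mono R fun _ hd => le_trans hd h

theorem map_mem_weightLE (φ : R →+* S) (hf : f ∈ weightLE w n) : map φ f ∈ weightLE w n :=
  map_mem_restrictSupport φ hf

theorem monomial_mem_weightLE {d : σ →₀ ℕ} {c : R} (h : Finsupp.weight w d ≤ n) :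
    monomial d c ∈ weightLE w n := by
  rw [weightLE, monomial_mem_restrictSupport]
  exact Or.inl h

theorem mul_mem_weightLE (hf : f ∈ weightLE w m) (hg : g ∈ weightLE w n) :
    f * g ∈ weightLE w (m + n) := by
  classical
  refine mem_weightLE.2 fun d hd => ?_
  rw [coeff_mul] at hd
  obtain ⟨x, hx, hne⟩ := Finset.exists_ne_zero_of_sum_ne_zero hd
  rw [← Finset.HasAntidiagonal.mem_antidiagonal.1 hx, map_add]
  exact add_le_add (mem_weightLE.1 hf _ (left_ne_zero_of_mul hne))
    (mem_weightLE.1 hg _ (right_ne_zero_of_mul hne))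

theorem C_mul_mem_weightLE (c : R) (hf : f ∈ weightLE w n) : C c * f ∈ weightLE w n := by
  rw [← smul_eq_C_mul]
  exact Submodule.smul_mem _ c hf

theorem X_pow_mem_weightLE (i : σ) (k : ℕ) :
    (X i ^ k : MvPolynomial σ R) ∈ weightLE w (k * w i) := by
  rw [X_pow_eq_monomial]
  exact monomial_mem_weightLE (by simp [Finsupp.weight_single])

theorem mem_weightLE_of_mul_X_pow_mem {c : R} (hc : IsUnit c) {i : σ} {k : ℕ}
    (h : f * (C c * X i ^ k) ∈ weightLE w n) : f ∈ weightLE w (n - k * w i) := by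
  refine mem_weightLE.2 fun d hd => ?_
  have := mem_weightLE.1 h (d + Finsupp.single i k) (by
    rwa [C_mul_X_pow_eq_monomial, coeff_mul_monomial, hc.mul_left_eq_zero.ne])
  rw [map_add, Finsupp.weight_single, nsmul_eq_mul] at this
  linarith

theorem weight_nonneg (hw : 0 ≤ w) (d : σ →₀ ℕ) : 0 ≤ Finsupp.weight w d := by
  rw [Finsupp.weight_apply]
  exact Finset.sum_nonneg fun i _ => nsmul_nonneg (hw i) _

theorem weightLE_eq_bot_of_neg (hw : 0 ≤ w) (hn : n < 0) :
    weightLE (R := R) w n = ⊥ := by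
  refine (Submodule.eq_bot_iff _).2 fun f hf => ?_
  ext d
  by_contra hd
  exact absurd (weight_nonneg hw d) (not_le.2 ((mem_weightLE.1 hf d hd).trans_lt hn))

theorem exists_mem_weightLE (w : σ → ℤ) (f : MvPolynomial σ R) : ∃ n, f ∈ weightLE w n := by
  obtain ⟨n, hn⟩ := (f.support.image (Finsupp.weight w)).exists_le
  refine ⟨n, mem_weightLE.2 fun d hd => hn _ ?_⟩
  exact Finset.mem_image_of_mem _ (mem_support_iff.2 hd)

theorem int_induction_of_neg {P : ℤ → Prop} (neg : ∀ n < 0, P n) (step : ∀ n, P (n - 1) → P n)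
    (n : ℤ) : P n := by
  rcases lt_or_ge n 0 with hn | hn
  · exact neg n hn
  · induction n, hn using Int.leInduction with
    | base => exact step 0 (neg _ (by norm_num))
    | succ k _ ih => exact step _ (by rwa [add_sub_cancel_right])

end WeightFiltration

section Division

variable {σ R S : Type*} [CommRing R] [CommRing S] {w : σ → ℤ}

/-- `f` equals a unit times `Xᵢ ^ n` plus terms of strictly smaller `w`-weight. -/
def HasLeadingPow (w : σ → ℤ) (i : σ) (n : ℕ) (f : MvPolynomial σ R) : Prop :=
  ∃ c : R, IsUnit c ∧ f - C c * X i ^ n ∈ weightLE w (n * w i - 1)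

theorem HasLeadingPow.map {i : σ} {n : ℕ} {f : MvPolynomial σ R} (hf : HasLeadingPow w i n f)
    (φ : R →+* S) : HasLeadingPow w i n (MvPolynomial.map φ f) := by
  obtain ⟨c, hc, hlow⟩ := hf
  refine ⟨φ c, hc.map φ, ?_⟩
  simpa only [map_sub, map_mul, map_pow, map_C, map_X] using map_mem_weightLE φ hlow

/-- The sums `r + ∑ uᵢ fᵢ` of weight at most `N` in which `r` has degree less than `nᵢ` in each
variable `Xᵢ`, `i ∈ s`. -/
noncomputable def divisionSubmodule (w : σ → ℤ) (s : Finset σ) (n : σ → ℕ)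
    (f : σ → MvPolynomial σ R) (N : ℤ) : Submodule R (MvPolynomial σ R) :=
  (restrictSupport R {d | ∀ i ∈ s, d i < n i} ⊓ weightLE w N) ⊔
    ⨆ i ∈ s, (weightLE w (N - n i * w i)).map (LinearMap.mulRight R (f i))

variable {s : Finset σ} {n : σ → ℕ} {f : σ → MvPolynomial σ R}

theorem divisionSubmodule_mono {M N : ℤ} (h : M ≤ N) :
    divisionSubmodule w s n f M ≤ divisionSubmodule w s n f N :=
  sup_le_sup (inf_le_inf_left _ (weightLE_mono h))
    (iSup₂_mono fun _ _ => Submodule.map_mono (weightLE_mono (sub_le_sub_right h _)))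

theorem weightLE_le_divisionSubmodule (hw : 0 ≤ w)
    (hf : ∀ i ∈ s, HasLeadingPow w i (n i) (f i)) (N : ℤ) :
    weightLE w N ≤ divisionSubmodule w s n f N := by
  induction N using int_induction_of_neg with
  | neg N hN => exact (weightLE_eq_bot_of_neg hw hN).trans_le bot_le
  | step N ih =>
    rw [weightLE, restrictSupport_eq_span, Submodule.span_le]
    rintro _ ⟨d, hd, rfl⟩
    by_cases hbox : ∀ i ∈ s, d i < n i
    · exact Submodule.mem_sup_left ⟨(monomial_mem_restrictSupport _).2 (Or.inl hbox),
        monomial_mem_weightLE hd⟩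
    push Not at hbox
    obtain ⟨i, hi, hle⟩ := hbox
    obtain ⟨c, hc, hlow⟩ := hf i hi
    obtain ⟨b, hb⟩ := hc.exists_left_inv
    obtain ⟨e, rfl⟩ := exists_add_of_le (Finsupp.single_le_iff.2 hle)
    rw [Set.mem_ofPred_eq, map_add, Finsupp.weight_single, nsmul_eq_mul] at hd
    have he : monomial e b ∈ weightLE w (N - n i * w i) := monomial_mem_weightLE (by linarith)
    have hsplit : monomial (Finsupp.single i (n i) + e) 1 =
        monomial e b * f i - monomial e b * (f i - C c * X i ^ n i) := by
      rw [mul_sub, sub_sub_cancel, C_mul_X_pow_eq_monomial, monomial_mul, hb, add_comm]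
    simp only [SetLike.mem_coe, hsplit]
    refine Submodule.sub_mem _ (Submodule.mem_sup_right ?_)
      (divisionSubmodule_mono (by linarith) (ih ?_))
    · exact Submodule.mem_iSup_of_mem i (Submodule.mem_iSup_of_mem hi ⟨_, he, rfl⟩)
    · exact weightLE_mono (by linarith) (mul_mem_weightLE he hlow)

theorem exists_division (hw : 0 ≤ w) (hf : ∀ i ∈ s, HasLeadingPow w i (n i) (f i)) {N : ℤ}
    {h : MvPolynomial σ R} (hh : h ∈ weightLE w N) :
    ∃ r ∈ weightLE w N, r ∈ restrictSupport R {d | ∀ i ∈ s, d i < n i} ∧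
      ∃ u : σ → MvPolynomial σ R, (∀ i, u i ∈ weightLE w (N - n i * w i)) ∧
        h = r + ∑ i ∈ s, u i * f i := by
  obtain ⟨r, hr, _, hx, rfl⟩ := Submodule.mem_sup.1 (weightLE_le_divisionSubmodule hw hf N hh)
  obtain ⟨v, rfl⟩ := (Submodule.mem_iSup_finset_iff_exists_sum _ _).1 hx
  choose u hu huv using fun i => (v i).2
  exact ⟨r, hr.2, hr.1, u, hu, by simp only [← huv, LinearMap.mulRight_apply]⟩

end Division

/-- The exponents `d` with `d 0 < m` and `d 1 < n`. -/
def expBox (m n : ℕ) : Set (Fin 2 →₀ ℕ) := {d | d 0 < m ∧ d 1 < n}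

section NormalForm

theorem eval_eq_zero_of_mem_span_pair {σ R : Type*} [CommRing R] {f g h : MvPolynomial σ R}
    {x : σ → R} (hf : eval x f = 0) (hg : eval x g = 0) (hh : h ∈ Ideal.span {f, g}) :
    eval x h = 0 := by
  obtain ⟨u, v, rfl⟩ := Ideal.mem_span_pair.1 hh
  simp [hf, hg]

variable {S S' : Type*} [CommRing S] [CommRing S'] {w : Fin 2 → ℤ} {m n : ℕ}
  {f g h r : MvPolynomial (Fin 2) S}

theorem expBox_finite (m n : ℕ) : (expBox m n).Finite := by
  refine (Set.finite_Iic (Finsupp.single 0 m + Finsupp.single 1 n)).subset fun d hd i => ?_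
  fin_cases i
  · simpa using hd.1.le
  · simpa using hd.2.le

noncomputable instance (m n : ℕ) : Fintype (expBox m n) := (expBox_finite m n).fintype

theorem exists_division_pair (hw : 0 ≤ w) (hf : HasLeadingPow w 0 m f)
    (hg : HasLeadingPow w 1 n g) {N : ℤ} (hh : h ∈ weightLE w N) :
    ∃ r ∈ weightLE w N, r ∈ restrictSupport S (expBox m n) ∧
      ∃ u ∈ weightLE w (N - m * w 0), ∃ v ∈ weightLE w (N - n * w 1), h = r + u * f + v * g := by
  have hfg : ∀ i ∈ Finset.univ, HasLeadingPow w i (![m, n] i) (![f, g] i) := by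
    simp [Fin.forall_fin_two, hf, hg]
  obtain ⟨r, hrw, hr, u, hu, rfl⟩ := exists_division hw hfg hh
  refine ⟨r, hrw, ?_, u 0, hu 0, u 1, hu 1, ?_⟩
  · simpa [Fin.forall_fin_two, expBox] using hr
  · simp [Fin.sum_univ_two, add_assoc]

theorem exists_X_degree_lt_add_mul (hw : 0 ≤ w) (hf : HasLeadingPow w 0 m f)
    (h : MvPolynomial (Fin 2) S) :
    ∃ v ∈ restrictSupport S {d | d 0 < m}, ∃ t, h = v + t * f := by
  obtain ⟨N, hN⟩ := exists_mem_weightLE w h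
  obtain ⟨v, -, hv, u, -, rfl⟩ :=
    exists_division (s := {0}) (n := fun _ => m) (f := fun _ => f) hw (by simpa using hf) hN
  exact ⟨v, by simpa using hv, u 0, by simp⟩

theorem mem_weightLE_sub_one_of_add_eq_zero (hf : HasLeadingPow w 0 m f)
    (hg : HasLeadingPow w 1 n g) {u v : MvPolynomial (Fin 2) S} {N : ℤ}
    (hr : r ∈ restrictSupport S (expBox m n)) (hv : v ∈ restrictSupport S {d | d 0 < m})
    (huN : u ∈ weightLE w (N - m * w 0)) (hvN : v ∈ weightLE w (N - n * w 1))
    (h : r + u * f + v * g = 0) :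
    r ∈ weightLE w (N - 1) ∧ u ∈ weightLE w (N - 1 - m * w 0) ∧
      v ∈ weightLE w (N - 1 - n * w 1) := by
  obtain ⟨b, hb, hflow⟩ := hf
  obtain ⟨c, hc, hglow⟩ := hg
  have hx : u * (C b * X 0 ^ m) ∈ restrictSupport S {d | m ≤ d 0} :=
    mul_X_pow_mem_restrictSupport (s := Set.univ) b (by simp) fun d _ => by simp
  have hy : v * (C c * X 1 ^ n) ∈ restrictSupport S {d | d 0 < m ∧ n ≤ d 1} :=
    mul_X_pow_mem_restrictSupport c hv fun d hd => by simpa using hd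
  have hsum : r + u * (C b * X 0 ^ m) + v * (C c * X 1 ^ n) ∈ weightLE w (N - 1) := by
    rw [show r + u * (C b * X 0 ^ m) + v * (C c * X 1 ^ n) =
      -(u * (f - C b * X 0 ^ m) + v * (g - C c * X 1 ^ n)) by linear_combination h]
    exact neg_mem (add_mem
      (weightLE_mono (by linarith) (mul_mem_weightLE huN hflow))
      (weightLE_mono (by linarith) (mul_mem_weightLE hvN hglow)))
  obtain ⟨hr', hu', hv'⟩ := mem_restrictSupport_of_add_add_mem
    (Set.disjoint_left.2 fun d hd hd' => hd.1.not_ge hd')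
    (Set.disjoint_left.2 fun d hd hd' => hd.2.not_ge hd'.2)
    (Set.disjoint_left.2 fun d hd hd' => hd'.1.not_ge hd) hr hx hy hsum
  exact ⟨hr', mem_weightLE_of_mul_X_pow_mem hb hu', mem_weightLE_of_mul_X_pow_mem hc hv'⟩

theorem eq_zero_of_mem_expBox_of_mem_span (hw : 0 ≤ w) (hf : HasLeadingPow w 0 m f)
    (hg : HasLeadingPow w 1 n g) (hr : r ∈ restrictSupport S (expBox m n))
    (hspan : r ∈ Ideal.span {f, g}) : r = 0 := by
  obtain ⟨u, v, huv⟩ := Ideal.mem_span_pair.1 hspan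
  obtain ⟨v, hv, t, rfl⟩ := exists_X_degree_lt_add_mul hw hf v
  have hrel : r + -(u + t * g) * f + -v * g = 0 := by linear_combination -huv
  generalize -(u + t * g) = u at hrel
  have key (N : ℤ) : r ∈ weightLE w N → u ∈ weightLE w (N - m * w 0) →
      -v ∈ weightLE w (N - n * w 1) → r = 0 := by
    induction N using int_induction_of_neg with
    | neg N hN =>
      rw [weightLE_eq_bot_of_neg hw hN]
      exact fun hr0 _ _ => hr0
    | step N ih =>
      intro _ huN hvN
      obtain ⟨hr', hu', hv'⟩ :=
        mem_weightLE_sub_one_of_add_eq_zero hf hg hr (neg_mem hv) huN hvN hrel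
      exact ih hr' hu' hv'
  obtain ⟨a, ha⟩ := exists_mem_weightLE w r
  obtain ⟨b, hb⟩ := exists_mem_weightLE w u
  obtain ⟨c, hc⟩ := exists_mem_weightLE w (-v)
  refine key (max a (max (b + m * w 0) (c + n * w 1))) (weightLE_mono (le_max_left _ _) ha)
    (weightLE_mono ?_ hb) (weightLE_mono ?_ hc)
  · linarith [(le_max_left (b + m * w 0) (c + n * w 1)).trans (le_max_right a _)]
  · linarith [(le_max_right (b + m * w 0) (c + n * w 1)).trans (le_max_right a _)]

/-- Reduction modulo `f` and `g` identifies the polynomials with exponents in the box with the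
quotient ring; this is the monomial basis of `S[X, Y] / (f, g)`. -/
noncomputable def normalFormEquiv (hw : 0 ≤ w) (hf : HasLeadingPow w 0 m f)
    (hg : HasLeadingPow w 1 n g) :
    restrictSupport S (expBox m n) ≃ₗ[S] MvPolynomial (Fin 2) S ⧸ Ideal.span {f, g} :=
  LinearEquiv.ofBijective
    ((Ideal.Quotient.mkₐ S (Ideal.span {f, g})).toLinearMap ∘ₗ Submodule.subtype _) <| by
    constructor
    · refine (injective_iff_map_eq_zero _).2 fun r hr => Subtype.ext ?_
      exact eq_zero_of_mem_expBox_of_mem_span hw hf hg r.2 (Ideal.Quotient.eq_zero_iff_mem.1 hr)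
    · intro x
      obtain ⟨h, rfl⟩ := Ideal.Quotient.mk_surjective x
      obtain ⟨N, hN⟩ := exists_mem_weightLE w h
      obtain ⟨r, -, hr, u, -, v, -, rfl⟩ := exists_division_pair hw hf hg hN
      refine ⟨⟨r, hr⟩, (Ideal.Quotient.eq.2 ?_).symm⟩
      exact Ideal.mem_span_pair.2 ⟨u, v, by simp only [Submodule.subtype_apply]; ring⟩

/-- The remainder of `h` modulo `f` and `g` with exponents in the box. -/
noncomputable def normalForm (hw : 0 ≤ w) (hf : HasLeadingPow w 0 m f)
    (hg : HasLeadingPow w 1 n g) (h : MvPolynomial (Fin 2) S) : MvPolynomial (Fin 2) S :=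
  (normalFormEquiv hw hf hg).symm (Ideal.Quotient.mk _ h)

variable (hw : 0 ≤ w) (hf : HasLeadingPow w 0 m f) (hg : HasLeadingPow w 1 n g)

theorem normalForm_mem : normalForm hw hf hg h ∈ restrictSupport S (expBox m n) :=
  Subtype.property _

theorem sub_normalForm_mem : h - normalForm hw hf hg h ∈ Ideal.span {f, g} :=
  Ideal.Quotient.eq.1 ((normalFormEquiv hw hf hg).apply_symm_apply _).symm

theorem normalForm_eq_of_mem (hr : r ∈ restrictSupport S (expBox m n))
    (hhr : h - r ∈ Ideal.span {f, g}) : normalForm hw hf hg h = r := by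
  refine sub_eq_zero.1 (eq_zero_of_mem_expBox_of_mem_span hw hf hg
    (sub_mem (normalForm_mem hw hf hg) hr) ?_)
  rw [← sub_sub_sub_cancel_left]
  exact sub_mem hhr (sub_normalForm_mem hw hf hg)

theorem normalForm_eq_self (hr : r ∈ restrictSupport S (expBox m n)) :
    normalForm hw hf hg r = r :=
  normalForm_eq_of_mem hw hf hg hr (by rw [sub_self]; exact zero_mem _)

theorem normalForm_eq_zero_iff : normalForm hw hf hg h = 0 ↔ h ∈ Ideal.span {f, g} := by
  refine ⟨fun h0 => ?_, fun hh => normalForm_eq_of_mem hw hf hg (zero_mem _) (by rwa [sub_zero])⟩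
  simpa only [h0, sub_zero] using sub_normalForm_mem (h := h) hw hf hg

theorem eval_normalForm {x : Fin 2 → S} (hfx : eval x f = 0) (hgx : eval x g = 0) :
    eval x (normalForm hw hf hg h) = eval x h := by
  have := eval_eq_zero_of_mem_span_pair hfx hgx (sub_normalForm_mem (h := h) hw hf hg)
  rw [map_sub] at this
  exact (sub_eq_zero.1 this).symm

theorem exists_eq_normalForm_add {N : ℤ} (hh : h ∈ weightLE w N) :
    normalForm hw hf hg h ∈ weightLE w N ∧
      ∃ u ∈ weightLE w (N - m * w 0), ∃ v ∈ weightLE w (N - n * w 1),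
        h = normalForm hw hf hg h + u * f + v * g := by
  obtain ⟨r, hrN, hr, u, hu, v, hv, rfl⟩ := exists_division_pair hw hf hg hh
  rw [normalForm_eq_of_mem hw hf hg hr (Ideal.mem_span_pair.2 ⟨u, v, by ring⟩)]
  exact ⟨hrN, u, hu, v, hv, rfl⟩

theorem map_normalForm (φ : S →+* S') :
    MvPolynomial.map φ (normalForm hw hf hg h) =
      normalForm hw (hf.map φ) (hg.map φ) (MvPolynomial.map φ h) := by
  refine (normalForm_eq_of_mem _ _ _ (map_mem_restrictSupport φ (normalForm_mem hw hf hg)) ?_).symm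
  rw [← map_sub, ← Set.image_pair, ← Ideal.map_span]
  exact Ideal.mem_map_of_mem _ (sub_normalForm_mem hw hf hg)

/-- The basis of `S[X, Y] / (f, g)` formed by the classes of the monomials in the box. -/
noncomputable def monomialBasis :
    Module.Basis (expBox m n) S (MvPolynomial (Fin 2) S ⧸ Ideal.span {f, g}) :=
  (basisRestrictSupport S (expBox m n)).map (normalFormEquiv hw hf hg)

theorem monomialBasis_repr_mk (h : MvPolynomial (Fin 2) S) (d : expBox m n) :
    (monomialBasis hw hf hg).repr (Ideal.Quotient.mk _ h) d = coeff d (normalForm hw hf hg h) :=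
  rfl

theorem monomialBasis_apply (d : expBox m n) :
    monomialBasis hw hf hg d = Ideal.Quotient.mk _ (monomial d 1) := by
  refine Module.Basis.apply_eq_iff.2 (Finsupp.ext fun e => ?_)
  rw [monomialBasis_repr_mk, normalForm_eq_self hw hf hg
    ((monomial_mem_restrictSupport _).2 (Or.inl d.2)), coeff_monomial, Finsupp.single_apply,
    if_congr Subtype.ext_iff.symm rfl rfl]

/-- The matrix of multiplication by `h` on `S[X, Y] / (f, g)` in the monomial basis. -/
noncomputable def mulMatrix (h : MvPolynomial (Fin 2) S) : Matrix (expBox m n) (expBox m n) S :=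
  Algebra.leftMulMatrix (monomialBasis hw hf hg) (Ideal.Quotient.mk _ h)

theorem norm_mk_eq_det_mulMatrix (h : MvPolynomial (Fin 2) S) :
    Algebra.norm S (Ideal.Quotient.mk (Ideal.span {f, g}) h) = (mulMatrix hw hf hg h).det :=
  Algebra.norm_eq_matrix_det (monomialBasis hw hf hg) _

theorem mulMatrix_apply (h : MvPolynomial (Fin 2) S) (d e : expBox m n) :
    mulMatrix hw hf hg h d e = coeff d (normalForm hw hf hg (h * monomial e 1)) := by
  rw [mulMatrix, Algebra.leftMulMatrix_eq_repr_mul, monomialBasis_apply, ← map_mul,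
    monomialBasis_repr_mk]

theorem mulMatrix_map (φ : S →+* S') (h : MvPolynomial (Fin 2) S) :
    (mulMatrix hw hf hg h).map φ =
      mulMatrix hw (hf.map φ) (hg.map φ) (MvPolynomial.map φ h) := by
  ext d e
  rw [Matrix.map_apply, mulMatrix_apply, mulMatrix_apply, ← coeff_map, map_normalForm, map_mul,
    map_monomial, map_one]

theorem mulMatrix_mulVec (h : MvPolynomial (Fin 2) S)
    (hr : r ∈ restrictSupport S (expBox m n)) :
    (mulMatrix hw hf hg h).mulVec (fun d => coeff d r) =
      fun d : expBox m n => coeff d (normalForm hw hf hg (h * r)) := by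
  have := Algebra.leftMulMatrix_mulVec_repr (monomialBasis hw hf hg)
    (Ideal.Quotient.mk _ h) (Ideal.Quotient.mk _ r)
  rw [funext (monomialBasis_repr_mk hw hf hg r), normalForm_eq_self hw hf hg hr] at this
  exact this

theorem exists_coeff_eq (x : expBox m n → S) :
    ∃ r ∈ restrictSupport S (expBox m n), (fun d : expBox m n => coeff d r) = x :=
  ⟨_, ((basisRestrictSupport S (expBox m n)).equivFun.symm x).2,
    (basisRestrictSupport S (expBox m n)).equivFun.apply_symm_apply x⟩

theorem eq_zero_of_forall_coeff_eq_zero (hr : r ∈ restrictSupport S (expBox m n))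
    (h : ∀ d : expBox m n, coeff d r = 0) : r = 0 := by
  ext d
  by_cases hd : d ∈ expBox m n
  · exact h ⟨d, hd⟩
  · exact coeff_eq_zero_of_mem_restrictSupport hr hd

/-- The matrix of evaluation at the points `x j` on the polynomials with exponents in the box. -/
noncomputable def evalMatrix {κ : Type*} (m n : ℕ) (x : κ → Fin 2 → S) :
    Matrix κ (expBox m n) S :=
  Matrix.of fun j d => eval (x j) (monomial d 1)

theorem evalMatrix_mulVec {κ : Type*} (x : κ → Fin 2 → S)
    (hr : r ∈ restrictSupport S (expBox m n)) :
    (evalMatrix m n x).mulVec (fun d => coeff d r) = fun j => eval (x j) r := by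
  have hsum : r = ∑ d : expBox m n, monomial d (coeff d r) := by
    refine sub_eq_zero.1 (eq_zero_of_forall_coeff_eq_zero (sub_mem hr (sum_mem fun d _ =>
      (monomial_mem_restrictSupport _).2 (Or.inl d.2))) fun d => ?_)
    simp only [coeff_sub, coeff_sum, coeff_monomial]
    rw [Fintype.sum_eq_single d fun e he => if_neg fun h => he (Subtype.ext h), if_pos rfl,
      sub_self]
  funext j
  nth_rewrite 2 [hsum]
  simp only [map_sum, Matrix.mulVec, dotProduct, evalMatrix, Matrix.of_apply, eval_monomial,
    one_mul, mul_comm]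

end NormalForm

section Weierstrass

variable {S S' : Type*} [CommRing S] [CommRing S'] {p q : ℕ} {F : MvPolynomial (Fin 2) S}

/-- The weights `p` of `X` and `q` of `Y`, which make `Y ^ p - X ^ q` homogeneous. -/
def curveWeight (p q : ℕ) : Fin 2 → ℤ := ![p, q]

@[simp]
theorem curveWeight_zero (p q : ℕ) : curveWeight p q 0 = p := rfl

@[simp]
theorem curveWeight_one (p q : ℕ) : curveWeight p q 1 = q := rfl

theorem curveWeight_nonneg (p q : ℕ) : 0 ≤ curveWeight p q :=
  fun i => by fin_cases i <;> simp [curveWeight]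

theorem weight_curveWeight (d : Fin 2 →₀ ℕ) :
    Finsupp.weight (curveWeight p q) d = d 0 * p + d 1 * q := by
  rw [Finsupp.weight_apply, Finsupp.sum_fintype _ _ (by simp)]
  simp

/-- `F` is `Y ^ p - X ^ q` plus terms of smaller weight. -/
def IsWeierstrass (p q : ℕ) (F : MvPolynomial (Fin 2) S) : Prop :=
  F - (X 1 ^ p - X 0 ^ q) ∈ weightLE (curveWeight p q) (p * q - 1)

theorem isWeierstrass_wPoly {S : Type} [CommRing S] (a : idxSet p q → S) :
    IsWeierstrass p q (wPoly S p q a) := by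
  rw [IsWeierstrass, wPoly, add_sub_cancel_left]
  refine sum_mem fun i _ => ?_
  rw [mul_assoc]
  refine C_mul_mem_weightLE _ (weightLE_mono ?_
    (mul_mem_weightLE (X_pow_mem_weightLE 0 _) (X_pow_mem_weightLE 1 _)))
  have hi : i.1.1 * p + i.1.2 * q < p * q := (Finset.mem_filter.1 i.2).2
  exact Int.le_sub_one_of_lt (by simpa using (by exact_mod_cast hi))

theorem pderiv_mem_weightLE {σ : Type*} {w : σ → ℤ} {n : ℤ} {f : MvPolynomial σ S} (i : σ)
    (hf : f ∈ weightLE w n) : pderiv i f ∈ weightLE w (n - w i) := by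
  refine mem_weightLE.2 fun d hd => ?_
  rw [coeff_pderiv] at hd
  have := mem_weightLE.1 hf _ (left_ne_zero_of_mul hd)
  rw [map_add, Finsupp.weight_single, one_smul] at this
  linarith

namespace IsWeierstrass

theorem map (hF : IsWeierstrass p q F) (φ : S →+* S') :
    IsWeierstrass p q (MvPolynomial.map φ F) := by
  simpa only [IsWeierstrass, map_sub, map_pow, map_X] using map_mem_weightLE φ hF

theorem hasLeadingPow_pderiv_zero [Nontrivial S] (hF : IsWeierstrass p q F)
    (hq : IsUnit (q : S)) : HasLeadingPow (curveWeight p q) 0 (q - 1) (pderiv 0 F) := by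
  have hq1 : 1 ≤ q := Nat.one_le_iff_ne_zero.2 fun h => hq.ne_zero (by simp [h])
  have hlow := pderiv_mem_weightLE 0 hF
  rw [map_sub, show pderiv 0 (X 1 ^ p - X 0 ^ q : MvPolynomial (Fin 2) S) =
    C (-(q : S)) * X 0 ^ (q - 1) by simp] at hlow
  refine ⟨-q, hq.neg, weightLE_mono (le_of_eq ?_) hlow⟩
  rw [curveWeight_zero, Nat.cast_sub hq1]
  push_cast
  ring

theorem hasLeadingPow_pderiv_one [Nontrivial S] (hF : IsWeierstrass p q F)
    (hp : IsUnit (p : S)) : HasLeadingPow (curveWeight p q) 1 (p - 1) (pderiv 1 F) := by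
  have hp1 : 1 ≤ p := Nat.one_le_iff_ne_zero.2 fun h => hp.ne_zero (by simp [h])
  have hlow := pderiv_mem_weightLE 1 hF
  rw [map_sub, show pderiv 1 (X 1 ^ p - X 0 ^ q : MvPolynomial (Fin 2) S) =
    C (p : S) * X 1 ^ (p - 1) by simp] at hlow
  refine ⟨p, hp, weightLE_mono (le_of_eq ?_) hlow⟩
  rw [curveWeight_one, Nat.cast_sub hp1]
  push_cast
  ring

end IsWeierstrass

end Weierstrass

section Determinant

open scoped Polynomial

theorem C_coeff_zero_add_X_smul_divX {R ι : Type*} [CommRing R] (M : Matrix ι ι R[X]) :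
    (M.map (·.coeff 0)).map Polynomial.C + (Polynomial.X : R[X]) • M.map Polynomial.divX = M := by
  ext1 i j
  rw [Matrix.add_apply, Matrix.smul_apply, smul_eq_mul, mul_comm, add_comm]
  exact Polynomial.divX_mul_X_add (M i j)

theorem coeff_map_C_mul {R ι κ τ : Type*} [CommRing R] [Fintype ι] (A : Matrix κ ι R)
    (M : Matrix ι τ R[X]) (k : ℕ) :
    (A.map Polynomial.C * M).map (·.coeff k) = A * M.map (·.coeff k) := by
  ext i j
  simp [Matrix.mul_apply]

theorem coeff_mul_map_C {R ι κ τ : Type*} [CommRing R] [Fintype ι] (M : Matrix κ ι R[X])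
    (A : Matrix ι τ R) (k : ℕ) :
    (M * A.map Polynomial.C).map (·.coeff k) = M.map (·.coeff k) * A := by
  ext i j
  simp [Matrix.mul_apply]

variable {R ι κ : Type*} [CommRing R] [Fintype ι] [DecidableEq ι] [Fintype κ] [DecidableEq κ]
  {E : Matrix κ ι R} {V : Matrix ι κ R}

theorem det_add_mul_mul_eq_mul {A B : Matrix ι ι R} (hAV : A * V = 0) (hEV : E * V = 1) :
    (A + V * E * B).det = (A + V * E).det * (E * B * V).det := by
  have hdet : (1 + V * (E * (B - 1))).det = (E * B * V).det := by
    rw [Matrix.det_one_add_mul_comm, Matrix.mul_sub, Matrix.sub_mul, Matrix.mul_one, hEV,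
      add_sub_cancel]
  rw [← hdet, ← Matrix.det_mul]
  congr 1
  have hVEV : V * E * V = V := by rw [Matrix.mul_assoc, hEV, Matrix.mul_one]
  simp only [mul_add, add_mul, mul_sub, mul_one, ← Matrix.mul_assoc, hAV, hVEV, Matrix.zero_mul]
  abel

theorem det_one_add_smul_mul (hEV : E * V = 1) (c : R) :
    (1 + (c - 1) • (V * E)).det = c ^ Fintype.card κ := by
  rw [← Matrix.mul_smul, Matrix.det_one_add_mul_comm, Matrix.smul_mul, hEV, sub_smul, one_smul,
    add_sub_cancel, Matrix.det_smul, Matrix.det_one, mul_one]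

theorem exists_det_eq_X_pow_mul_det {M : Matrix ι ι R[X]} (hE : E * M.map (·.coeff 0) = 0)
    (hEV : E * V = 1) :
    ∃ N : Matrix ι ι R[X], M.det = Polynomial.X ^ Fintype.card κ * N.det ∧
      N.map (·.coeff 0) = M.map (·.coeff 0) + V * E * M.map (·.coeff 1) := by
  set M₀ := M.map (·.coeff 0)
  set D := M.map Polynomial.divX
  set P : Matrix ι ι R[X] := V.map Polynomial.C * E.map Polynomial.C with hP
  have hMD : M₀.map Polynomial.C + (Polynomial.X : R[X]) • D = M := C_coeff_zero_add_X_smul_divX M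
  have hEV' : E.map Polynomial.C * V.map Polynomial.C = (1 : Matrix κ κ R[X]) := by
    rw [← Matrix.map_mul, hEV, Matrix.map_one _ Polynomial.C_0 Polynomial.C_1]
  have hPP : P * P = P := by
    rw [hP, Matrix.mul_assoc, ← Matrix.mul_assoc (E.map Polynomial.C), hEV', Matrix.one_mul]
  have hPM : P * M = (Polynomial.X : R[X]) • (P * D) := by
    rw [← hMD, Matrix.mul_add, hP, Matrix.mul_assoc, ← Matrix.map_mul, hE]
    simp
  refine ⟨(1 - P) * M + P * D, ?_, ?_⟩
  · have hPN : P * ((1 - P) * M + P * D) = P * D := by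
      rw [mul_add, ← mul_assoc, ← mul_assoc, mul_sub, hPP, mul_one, sub_self, zero_mul, zero_add]
    have hfac : (1 + (Polynomial.X - 1 : R[X]) • P) * ((1 - P) * M + P * D) = M := by
      rw [add_mul, one_mul, smul_mul_assoc, hPN, sub_smul, one_smul, ← hPM, sub_mul, one_mul]
      abel
    rw [← det_one_add_smul_mul hEV', ← Matrix.det_mul, hfac]
  · have hφP : P.map Polynomial.constantCoeff = V * E := by
      rw [hP, Matrix.map_mul, Matrix.map_map, Matrix.map_map]
      congr 1 <;> exact Matrix.ext fun _ _ => Polynomial.coeff_C_zero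
    have hφD : D.map Polynomial.constantCoeff = M.map (·.coeff 1) :=
      Matrix.ext fun _ _ => Polynomial.coeff_divX
    change ((1 - P) * M + P * D).map Polynomial.constantCoeff = _
    rw [sub_mul, one_mul, hPM]
    have hX : ((Polynomial.X : R[X]) • (P * D)).map Polynomial.constantCoeff = 0 :=
      Matrix.ext fun _ _ => by simp
    rw [Matrix.map_add _ (map_add _), Matrix.map_sub _ (map_sub _), hX, sub_zero, Matrix.map_mul,
      hφP, hφD]
    rfl

theorem coeff_det_of_lt_card {M : Matrix ι ι R[X]} (hE : E * M.map (·.coeff 0) = 0)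
    (hEV : E * V = 1) {m : ℕ} (hm : m < Fintype.card κ) : M.det.coeff m = 0 := by
  obtain ⟨N, hN, -⟩ := exists_det_eq_X_pow_mul_det hE hEV
  rw [hN, Polynomial.coeff_X_pow_mul', if_neg hm.not_ge]

theorem coeff_det_card {M : Matrix ι ι R[X]} (hE : E * M.map (·.coeff 0) = 0)
    (hV : M.map (·.coeff 0) * V = 0) (hEV : E * V = 1) :
    M.det.coeff (Fintype.card κ) =
      (M.map (·.coeff 0) + V * E).det * (E * M.map (·.coeff 1) * V).det := by
  obtain ⟨N, hN, hN₀⟩ := exists_det_eq_X_pow_mul_det hE hEV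
  rw [hN, Polynomial.coeff_X_pow_mul', if_pos le_rfl, Nat.sub_self,
    ← det_add_mul_mul_eq_mul hV hEV, ← hN₀]
  exact RingHom.map_det Polynomial.constantCoeff N

theorem det_add_mul_ne_zero [IsDomain R] {A : Matrix ι ι R} (hE : E * A = 0) (hEV : E * V = 1)
    (hker : ∀ x, A.mulVec x = 0 → E.mulVec x = 0 → x = 0) : (A + V * E).det ≠ 0 := by
  intro hdet
  obtain ⟨x, hx, hAx⟩ := Matrix.exists_mulVec_eq_zero_iff.2 hdet
  have hEx : E.mulVec x = 0 := by
    have := congrArg E.mulVec hAx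
    rwa [Matrix.mulVec_mulVec, Matrix.mul_add, hE, ← Matrix.mul_assoc, hEV, Matrix.one_mul,
      zero_add, Matrix.mulVec_zero] at this
  refine hx (hker x ?_ hEx)
  rwa [Matrix.add_mulVec, ← Matrix.mulVec_mulVec, hEx, Matrix.mulVec_zero, add_zero] at hAx

end Determinant

section Nodes

theorem pderiv_comm {σ R : Type*} [CommRing R] (i j : σ) (f : MvPolynomial σ R) :
    pderiv i (pderiv j f) = pderiv j (pderiv i f) := by
  classical
  have h : ⁅(pderiv i : Derivation R (MvPolynomial σ R) _), pderiv j⁆ = 0 :=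
    derivation_ext fun k => by
      rw [Derivation.commutator_apply, pderiv_X, pderiv_X, Pi.single_apply, Pi.single_apply]
      split_ifs <;> simp
  rw [← sub_eq_zero, ← Derivation.commutator_apply, h, Derivation.zero_apply]

/-- The ideal generated by the partial derivatives. -/
noncomputable abbrev jacobianIdeal {R : Type*} [CommRing R] (G : MvPolynomial (Fin 2) R) :
    Ideal (MvPolynomial (Fin 2) R) :=
  Ideal.span {pderiv 0 G, pderiv 1 G}

theorem exists_eq_C_eval_add {R : Type*} [CommRing R] (f : MvPolynomial (Fin 2) R) (P : R × R) :
    ∃ g h, f = C (eval ![P.1, P.2] f) + g * (X 0 - C P.1) + h * (X 1 - C P.2) := by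
  induction f using MvPolynomial.induction_on with
  | C c => exact ⟨0, 0, by simp⟩
  | add f₁ f₂ h₁ h₂ =>
    obtain ⟨g₁, k₁, e₁⟩ := h₁
    obtain ⟨g₂, k₂, e₂⟩ := h₂
    refine ⟨g₁ + g₂, k₁ + k₂, ?_⟩
    rw [map_add, C_add]
    linear_combination e₁ + e₂
  | mul_X f i hf =>
    obtain ⟨g, k, e⟩ := hf
    fin_cases i
    · refine ⟨g * X 0 + C (eval ![P.1, P.2] f), k * X 0, ?_⟩
      simp only [Fin.zero_eta, map_mul, eval_X, Matrix.cons_val_zero]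
      linear_combination X 0 * e
    · refine ⟨g * X 1, k * X 1 + C (eval ![P.1, P.2] f), ?_⟩
      simp only [Fin.mk_one, map_mul, eval_X, Matrix.cons_val_one, Matrix.cons_val_fin_one]
      linear_combination X 1 * e

theorem exists_eq_mul_add_mul {R : Type*} [CommRing R] {f : MvPolynomial (Fin 2) R} {P : R × R}
    (hf : eval ![P.1, P.2] f = 0) :
    ∃ g h, f = g * (X 0 - C P.1) + h * (X 1 - C P.2) ∧
      eval ![P.1, P.2] g = eval ![P.1, P.2] (pderiv 0 f) ∧
      eval ![P.1, P.2] h = eval ![P.1, P.2] (pderiv 1 f) := by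
  obtain ⟨g, h, e⟩ := exists_eq_C_eval_add f P
  rw [hf, C_0, zero_add] at e
  refine ⟨g, h, e, ?_, ?_⟩ <;> simp [e]

theorem IsSingAt.eval_eq_zero {R : Type} [CommRing R] {G f : MvPolynomial (Fin 2) R} {P : R × R}
    (h : IsSingAt R G P) (hf : f ∈ jacobianIdeal G) : eval ![P.1, P.2] f = 0 :=
  eval_eq_zero_of_mem_span_pair h.2.1 h.2.2 hf

variable {K : Type} [Field K] {G f u v : MvPolynomial (Fin 2) K} {P Q : K × K}

theorem IsNodeAt.eval_eq_zero_of_mul_eq (h : IsNodeAt K G P)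
    (hf : G * f = u * pderiv 0 G + v * pderiv 1 G) :
    eval ![P.1, P.2] u = 0 ∧ eval ![P.1, P.2] v = 0 := by
  obtain ⟨⟨h0, hx, hy⟩, hh⟩ := h
  have e0 := congrArg (fun g => eval ![P.1, P.2] (pderiv 0 g)) hf
  have e1 := congrArg (fun g => eval ![P.1, P.2] (pderiv 1 g)) hf
  simp only [pderiv_mul, map_add, map_mul, h0, hx, hy, mul_zero, zero_mul, zero_add] at e0 e1
  rw [pderiv_comm 1 0] at e1
  simp only [hessPoly, map_sub, map_mul, map_pow] at hh
  constructor
  · refine (mul_eq_zero.1 ?_).resolve_right hh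
    linear_combination eval ![P.1, P.2] (pderiv 0 (pderiv 1 G)) * e1 -
      eval ![P.1, P.2] (pderiv 1 (pderiv 1 G)) * e0
  · refine (mul_eq_zero.1 ?_).resolve_right hh
    linear_combination eval ![P.1, P.2] (pderiv 0 (pderiv 1 G)) * e0 -
      eval ![P.1, P.2] (pderiv 0 (pderiv 0 G)) * e1

-- The local ring at a node is `K`, so some `s` acts on the Jacobian ring as the projection onto it.
theorem IsNodeAt.exists_mul_mem (h : IsNodeAt K G P) :
    ∃ s, eval ![P.1, P.2] s = 1 ∧
      ∀ f, eval ![P.1, P.2] f = 0 → s * f ∈ jacobianIdeal G := by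
  obtain ⟨⟨-, hx, hy⟩, hh⟩ := h
  obtain ⟨a, b, e0, ha, hb⟩ := exists_eq_mul_add_mul hx
  obtain ⟨c, d, e1, hc, hd⟩ := exists_eq_mul_add_mul hy
  have hdet : eval ![P.1, P.2] (a * d - b * c) = eval ![P.1, P.2] (hessPoly K G) := by
    simp only [hessPoly, map_sub, map_mul, map_pow, ha, hb, hc, hd]
    rw [pderiv_comm 1 0]
    ring
  refine ⟨C (eval ![P.1, P.2] (hessPoly K G))⁻¹ * (a * d - b * c), ?_, fun f hf => ?_⟩
  · rw [map_mul, eval_C, hdet, inv_mul_cancel₀ hh]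
  · obtain ⟨g, k, e, -⟩ := exists_eq_mul_add_mul hf
    rw [mul_assoc]
    refine Ideal.mul_mem_left _ _ (Ideal.mem_span_pair.2 ⟨g * d - k * c, k * a - g * b, ?_⟩)
    linear_combination (g * d - k * c) * e0 + (k * a - g * b) * e1 - (a * d - b * c) * e

theorem eval_eq_zero_of_forall_mul_mem {s : MvPolynomial (Fin 2) K} (hQ : IsSingAt K G Q)
    (hPQ : P ≠ Q) (hs : ∀ f, eval ![P.1, P.2] f = 0 → s * f ∈ jacobianIdeal G) :
    eval ![Q.1, Q.2] s = 0 := by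
  have key (f) (hf : eval ![P.1, P.2] f = 0) (hfQ : eval ![Q.1, Q.2] f ≠ 0) :
      eval ![Q.1, Q.2] s = 0 := by
    have := hQ.eval_eq_zero (hs f hf)
    rw [map_mul] at this
    exact (mul_eq_zero.1 this).resolve_right hfQ
  by_cases h : P.1 = Q.1
  · have h' : P.2 ≠ Q.2 := fun h' => hPQ (Prod.ext h h')
    exact key (X 1 - C P.2) (by simp) (by simpa [sub_eq_zero] using h'.symm)
  · exact key (X 0 - C P.1) (by simp) (by simpa [sub_eq_zero] using Ne.symm h)

theorem exists_forall_mul_mem_eval_eq_zero [IsAlgClosed K]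
    {I : Ideal (MvPolynomial (Fin 2) K)} (hf : f ∉ I) :
    ∃ P : K × K, ∀ g, g * f ∈ I → eval ![P.1, P.2] g = 0 := by
  have hne : Submodule.colon I {f} ≠ ⊤ := fun h => hf <| by
    have h1 : (1 : MvPolynomial (Fin 2) K) ∈ Submodule.colon I {f} := h ▸ Submodule.mem_top
    rwa [Submodule.mem_colon_singleton, one_smul] at h1
  obtain ⟨M, hM, hle⟩ := Ideal.exists_le_maximal _ hne
  obtain ⟨x, rfl⟩ := isMaximal_iff_eq_vanishingIdeal_singleton.1 hM
  refine ⟨(x 0, x 1), fun g hg => ?_⟩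
  have := hle (Submodule.mem_colon_singleton.2 hg)
  rw [mem_vanishingIdeal_singleton_iff, aeval_eq_eval] at this
  rwa [show ![x 0, x 1] = x from List.ofFn_inj.mp rfl]

theorem mem_of_mul_mem_of_eval_eq_zero [IsAlgClosed K]
    (hG : ∀ Q, IsSingAt K G Q → IsNodeAt K G Q) {I : Ideal (MvPolynomial (Fin 2) K)}
    (hI : jacobianIdeal G ≤ I) (hGf : G * f ∈ I)
    (hf : ∀ Q, IsSingAt K G Q → eval ![Q.1, Q.2] f = 0) : f ∈ I := by
  by_contra hfI
  obtain ⟨P, hP⟩ := exists_forall_mul_mem_eval_eq_zero hfI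
  have hJ (g) (hg : g ∈ jacobianIdeal G) : eval ![P.1, P.2] g = 0 :=
    hP g (I.mul_mem_right _ (hI hg))
  have hs : IsSingAt K G P :=
    ⟨hP G hGf, hJ _ (Ideal.subset_span (by simp)), hJ _ (Ideal.subset_span (by simp))⟩
  obtain ⟨s, hs1, hsf⟩ := (hG _ hs).exists_mul_mem
  exact zero_ne_one ((hP s (hI (hsf f (hf _ hs)))).symm.trans hs1)

end Nodes

section LowestTerm

open scoped Polynomial

variable {w : Fin 2 → ℤ} {m n : ℕ}

/-- The matrix of multiplication by `G` on `S[X, Y] / (G_X, G_Y)` in the monomial basis. -/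
noncomputable def jacobianMatrix {S : Type*} [CommRing S] {G : MvPolynomial (Fin 2) S}
    (hw : 0 ≤ w) (hf : HasLeadingPow w 0 m (pderiv 0 G)) (hg : HasLeadingPow w 1 n (pderiv 1 G)) :
    Matrix (expBox m n) (expBox m n) S :=
  mulMatrix hw hf hg G

theorem jacobianMatrix_map {S S' : Type*} [CommRing S] [CommRing S'] {G : MvPolynomial (Fin 2) S}
    {G' : MvPolynomial (Fin 2) S'} {φ : S →+* S'} (hG : MvPolynomial.map φ G = G') (hw : 0 ≤ w)
    (hf : HasLeadingPow w 0 m (pderiv 0 G)) (hg : HasLeadingPow w 1 n (pderiv 1 G))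
    (hf' : HasLeadingPow w 0 m (pderiv 0 G')) (hg' : HasLeadingPow w 1 n (pderiv 1 G')) :
    (jacobianMatrix hw hf hg).map φ = jacobianMatrix hw hf' hg' := by
  subst hG
  rw [jacobianMatrix, mulMatrix_map, jacobianMatrix]
  congr 1 <;> exact pderiv_map.symm

theorem evalMatrix_mul_coeff {S κ ι : Type*} [CommRing S] (x : κ → Fin 2 → S)
    {s : ι → MvPolynomial (Fin 2) S} (hs : ∀ i, s i ∈ restrictSupport S (expBox m n)) :
    evalMatrix m n x * Matrix.of (fun d i => coeff (d : expBox m n) (s i)) =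
      Matrix.of fun j i => eval (x j) (s i) := by
  ext j i
  exact congrFun (evalMatrix_mulVec x (hs i)) j

theorem mulMatrix_mul_coeff {S ι : Type*} [CommRing S] {f g : MvPolynomial (Fin 2) S}
    {s : ι → MvPolynomial (Fin 2) S} (hw : 0 ≤ w) (hf : HasLeadingPow w 0 m f)
    (hg : HasLeadingPow w 1 n g) (h : MvPolynomial (Fin 2) S)
    (hs : ∀ i, s i ∈ restrictSupport S (expBox m n)) :
    mulMatrix hw hf hg h * Matrix.of (fun d i => coeff (d : expBox m n) (s i)) =
      Matrix.of fun d i => coeff (d : expBox m n) (normalForm hw hf hg (h * s i)) :=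
  Matrix.ext fun d i => congrFun (mulMatrix_mulVec hw hf hg h (hs i)) d

theorem evalMatrix_map {S S' κ : Type*} [CommRing S] [CommRing S'] (φ : S →+* S')
    (x : κ → Fin 2 → S) : (evalMatrix m n x).map φ = evalMatrix m n fun j => φ ∘ x j := by
  ext j d
  simp [evalMatrix, map_eval, map_monomial]

theorem coeff_zero_eval_C_comp {σ R : Type*} [CommRing R] (f : MvPolynomial σ R[X])
    (x : σ → R) :
    (eval (Polynomial.C ∘ x) f).coeff 0 = eval x (map Polynomial.constantCoeff f) := by
  rw [← Polynomial.constantCoeff_apply, map_eval]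
  congr 2
  exact funext fun _ => Polynomial.coeff_C_zero

variable {K : Type} [Field K] {κ : Type*}

section

variable {G : MvPolynomial (Fin 2) K} {P : κ → K × K} {s : κ → MvPolynomial (Fin 2) K}

theorem exists_dual_system [DecidableEq κ] (hw : 0 ≤ w) (hf : HasLeadingPow w 0 m (pderiv 0 G))
    (hg : HasLeadingPow w 1 n (pderiv 1 G)) (hP : Function.Injective P)
    (hnode : ∀ j, IsNodeAt K G (P j)) :
    ∃ s : κ → MvPolynomial (Fin 2) K, (∀ i, s i ∈ restrictSupport K (expBox m n)) ∧
      (∀ j i, eval ![(P j).1, (P j).2] (s i) = if j = i then 1 else 0) ∧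
      ∀ i, G * s i ∈ jacobianIdeal G := by
  choose s hs hsJ using fun i => (hnode i).exists_mul_mem
  refine ⟨fun i => normalForm hw hf hg (s i), fun i => normalForm_mem hw hf hg, fun j i => ?_,
    fun i => ?_⟩
  · rw [eval_normalForm hw hf hg (hnode j).1.2.1 (hnode j).1.2.2]
    split_ifs with h
    · rw [h, hs]
    · exact eval_eq_zero_of_forall_mul_mem (hnode j).1 (hP.ne (Ne.symm h)) (hsJ i)
  · have hGs : G * s i ∈ jacobianIdeal G := mul_comm G (s i) ▸ hsJ i G (hnode i).1.1
    have := sub_mem hGs (Ideal.mul_mem_left _ G (sub_normalForm_mem (h := s i) hw hf hg))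
    rwa [mul_sub, sub_sub_cancel] at this

theorem evalMatrix_mul_jacobianMatrix (hw : 0 ≤ w) (hf : HasLeadingPow w 0 m (pderiv 0 G))
    (hg : HasLeadingPow w 1 n (pderiv 1 G)) (hsing : ∀ j, IsSingAt K G (P j)) :
    evalMatrix m n (fun j => ![(P j).1, (P j).2]) * jacobianMatrix hw hf hg = 0 := by
  have : jacobianMatrix hw hf hg = Matrix.of fun d e : expBox m n =>
      coeff d (normalForm hw hf hg (G * monomial e 1)) :=
    Matrix.ext fun d e => mulMatrix_apply hw hf hg G d e
  rw [this, evalMatrix_mul_coeff _ fun e => normalForm_mem hw hf hg]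
  ext j e
  rw [Matrix.of_apply, eval_normalForm hw hf hg (hsing j).2.1 (hsing j).2.2, map_mul, (hsing j).1,
    zero_mul, Matrix.zero_apply]

theorem jacobianMatrix_mul_coeff (hw : 0 ≤ w) (hf : HasLeadingPow w 0 m (pderiv 0 G))
    (hg : HasLeadingPow w 1 n (pderiv 1 G)) (hs : ∀ i, s i ∈ restrictSupport K (expBox m n))
    (hGs : ∀ i, G * s i ∈ jacobianIdeal G) :
    jacobianMatrix hw hf hg * Matrix.of (fun d i => coeff (d : expBox m n) (s i)) = 0 := by
  ext d i
  rw [jacobianMatrix, mulMatrix_mul_coeff hw hf hg G hs, Matrix.of_apply,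
    (normalForm_eq_zero_iff hw hf hg).2 (hGs i), coeff_zero, Matrix.zero_apply]

theorem eq_zero_of_jacobianMatrix_mulVec_eq_zero [IsAlgClosed K] (hw : 0 ≤ w)
    (hf : HasLeadingPow w 0 m (pderiv 0 G)) (hg : HasLeadingPow w 1 n (pderiv 1 G))
    (hnode : ∀ j, IsNodeAt K G (P j)) (hall : ∀ Q, IsSingAt K G Q → ∃ j, Q = P j)
    {x : expBox m n → K} (hx : (jacobianMatrix hw hf hg).mulVec x = 0)
    (hPx : (evalMatrix m n fun j => ![(P j).1, (P j).2]).mulVec x = 0) : x = 0 := by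
  obtain ⟨r, hr, rfl⟩ := exists_coeff_eq x
  rw [jacobianMatrix, mulMatrix_mulVec hw hf hg G hr] at hx
  rw [evalMatrix_mulVec _ hr] at hPx
  have hGr : G * r ∈ jacobianIdeal G := (normalForm_eq_zero_iff hw hf hg).1 <|
    eq_zero_of_forall_coeff_eq_zero (normalForm_mem hw hf hg) (congrFun hx)
  have hrJ : r ∈ jacobianIdeal G := by
    refine mem_of_mul_mem_of_eval_eq_zero (fun Q hQ => ?_) le_rfl hGr fun Q hQ => ?_
    all_goals obtain ⟨j, rfl⟩ := hall Q hQ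
    · exact hnode j
    · exact congrFun hPx j
  rw [eq_zero_of_mem_expBox_of_mem_span hw hf hg hr hrJ]
  rfl

end

-- Modulo `T²`, the relation `G s = r + u G_X + v G_Y` evaluated at the node loses its last two
-- terms: at `T = 0` the remainder `r` vanishes, and then so do `u` and `v` at the node.
theorem coeff_one_eval_normalForm {G : MvPolynomial (Fin 2) K[X]} {P : K × K}
    {s : MvPolynomial (Fin 2) K} (hw : 0 ≤ w) (hf : HasLeadingPow w 0 m (pderiv 0 G))
    (hg : HasLeadingPow w 1 n (pderiv 1 G)) (hP : IsNodeAt K (map Polynomial.constantCoeff G) P)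
    (hs : map Polynomial.constantCoeff G * s ∈
      jacobianIdeal (map Polynomial.constantCoeff G)) :
    (eval (Polynomial.C ∘ ![P.1, P.2])
        (normalForm hw hf hg (G * map Polynomial.C s))).coeff 1 =
      (eval (Polynomial.C ∘ ![P.1, P.2]) G).coeff 1 * eval ![P.1, P.2] s := by
  have hs₀ : map Polynomial.constantCoeff (map Polynomial.C s) = s := by
    rw [map_map, show (Polynomial.constantCoeff.comp Polynomial.C : K →+* K) = RingHom.id K from
      RingHom.ext fun _ => Polynomial.coeff_C_zero, map_id]
  have hr₀ : map Polynomial.constantCoeff (normalForm hw hf hg (G * map Polynomial.C s)) = 0 := by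
    rw [map_normalForm, normalForm_eq_zero_iff, map_mul, hs₀, ← pderiv_map, ← pderiv_map]
    exact hs
  obtain ⟨u, v, huv⟩ :=
    Ideal.mem_span_pair.1 (sub_normalForm_mem (h := G * map Polynomial.C s) hw hf hg)
  have huv₀ := congrArg (map Polynomial.constantCoeff) huv
  simp only [map_add, map_sub, map_mul, ← pderiv_map, hr₀, sub_zero, hs₀] at huv₀
  obtain ⟨hu, hv⟩ := hP.eval_eq_zero_of_mul_eq huv₀.symm
  obtain ⟨-, hx, hy⟩ := hP.1
  rw [pderiv_map] at hx hy
  rw [← coeff_zero_eval_C_comp] at hu hv hx hy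
  have key := congrArg (fun f => (eval (Polynomial.C ∘ ![P.1, P.2]) f).coeff 1) huv
  simp only [map_add, map_sub, map_mul, Polynomial.coeff_add, Polynomial.coeff_sub,
    Polynomial.mul_coeff_one, hu, hv, hx, hy, ← map_eval, Polynomial.coeff_C_zero,
    Polynomial.coeff_C_succ] at key
  linear_combination key

theorem evalMatrix_mul_coeff_one_mul_coeff [DecidableEq κ] {G : MvPolynomial (Fin 2) K[X]}
    {P : κ → K × K} {s : κ → MvPolynomial (Fin 2) K} (hw : 0 ≤ w)
    (hf : HasLeadingPow w 0 m (pderiv 0 G)) (hg : HasLeadingPow w 1 n (pderiv 1 G))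
    (hP : ∀ j, IsNodeAt K (map Polynomial.constantCoeff G) (P j))
    (hs : ∀ i, s i ∈ restrictSupport K (expBox m n))
    (hsP : ∀ j i, eval ![(P j).1, (P j).2] (s i) = if j = i then 1 else 0)
    (hsJ : ∀ i, map Polynomial.constantCoeff G * s i ∈
      jacobianIdeal (map Polynomial.constantCoeff G)) :
    evalMatrix m n (fun j => ![(P j).1, (P j).2]) *
        (jacobianMatrix hw hf hg).map (fun f => f.coeff 1) *
          Matrix.of (fun d i => coeff (d : expBox m n) (s i)) =
      Matrix.diagonal fun j => (eval (Polynomial.C ∘ ![(P j).1, (P j).2]) G).coeff 1 := by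
  have hV : (Matrix.of fun d i => coeff (d : expBox m n) (s i)).map Polynomial.C =
      Matrix.of fun d i => coeff (d : expBox m n) (map Polynomial.C (s i)) := by
    ext1 d i
    exact (coeff_map Polynomial.C _ _).symm
  rw [← coeff_map_C_mul, ← coeff_mul_map_C, Matrix.mul_assoc, hV, jacobianMatrix,
    mulMatrix_mul_coeff hw hf hg G fun i => map_mem_restrictSupport _ (hs i), evalMatrix_map,
    evalMatrix_mul_coeff _ fun i => normalForm_mem hw hf hg]
  ext j i
  rw [Matrix.map_apply, Matrix.of_apply, coeff_one_eval_normalForm hw hf hg (hP j) (hsJ i), hsP,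
    Matrix.diagonal_apply, mul_ite, mul_one, mul_zero]

theorem exists_coeff_det_jacobianMatrix [Fintype κ] [IsAlgClosed K]
    {G₀ : MvPolynomial (Fin 2) K} {P : κ → K × K} (hw : 0 ≤ w)
    (hf₀ : HasLeadingPow w 0 m (pderiv 0 G₀)) (hg₀ : HasLeadingPow w 1 n (pderiv 1 G₀))
    (hP : Function.Injective P) (hnode : ∀ j, IsNodeAt K G₀ (P j))
    (hall : ∀ Q, IsSingAt K G₀ Q → ∃ j, Q = P j) :
    ∃ e : K, e ≠ 0 ∧ ∀ (G : MvPolynomial (Fin 2) K[X]) (_ : map Polynomial.constantCoeff G = G₀)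
      (hf : HasLeadingPow w 0 m (pderiv 0 G)) (hg : HasLeadingPow w 1 n (pderiv 1 G)),
      (∀ k < Fintype.card κ, (jacobianMatrix hw hf hg).det.coeff k = 0) ∧
      (jacobianMatrix hw hf hg).det.coeff (Fintype.card κ) =
        e * ∏ j, (eval (Polynomial.C ∘ ![(P j).1, (P j).2]) G).coeff 1 := by
  classical
  obtain ⟨s, hs, hsP, hsJ⟩ := exists_dual_system hw hf₀ hg₀ hP hnode
  have hE := evalMatrix_mul_jacobianMatrix hw hf₀ hg₀ fun j => (hnode j).1
  have hV := jacobianMatrix_mul_coeff hw hf₀ hg₀ hs hsJ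
  have hEV := evalMatrix_mul_coeff (fun j => ![(P j).1, (P j).2]) hs
  replace hEV := hEV.trans (Matrix.ext fun j i => (hsP j i).trans Matrix.one_apply.symm)
  refine ⟨_, det_add_mul_ne_zero hE hEV fun x =>
    eq_zero_of_jacobianMatrix_mulVec_eq_zero hw hf₀ hg₀ hnode hall, fun G hG hf hg => ?_⟩
  have hM : (jacobianMatrix hw hf hg).map (·.coeff 0) = jacobianMatrix hw hf₀ hg₀ :=
    jacobianMatrix_map hG hw hf hg hf₀ hg₀
  rw [← hM] at hE hV ⊢
  refine ⟨fun k hk => coeff_det_of_lt_card hE hEV hk, ?_⟩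
  subst hG
  rw [coeff_det_card hE hV hEV, ← Matrix.det_diagonal,
    evalMatrix_mul_coeff_one_mul_coeff hw hf hg hnode hs hsP hsJ]

end LowestTerm

section Discriminant

open scoped Polynomial

theorem coeff_aeval_C_mul_X {σ R : Type*} [CommRing R] (f : MvPolynomial σ R) (t : σ → R)
    (k : ℕ) :
    (aeval (fun i => Polynomial.C (t i) * Polynomial.X) f : R[X]).coeff k =
      eval t (homogeneousComponent k f) := by
  induction f using MvPolynomial.induction_on' with
  | monomial d c =>
    rw [homogeneousComponent_of_mem (isHomogeneous_monomial c rfl), aeval_monomial,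
      Polynomial.algebraMap_eq]
    have hprod : (d.prod fun i e => (Polynomial.C (t i) * Polynomial.X) ^ e) =
        Polynomial.C (d.prod fun i e => t i ^ e) * Polynomial.X ^ d.degree := by
      simp only [Finsupp.prod, mul_pow, Finset.prod_mul_distrib, Finset.prod_pow_eq_pow_sum,
        map_prod, map_pow, Finsupp.degree_apply]
    rw [hprod, ← mul_assoc, ← Polynomial.C_mul, Polynomial.coeff_C_mul_X_pow]
    split_ifs with h
    · rw [eval_monomial]
    · rw [map_zero]
  | add f g hf hg => rw [map_add, Polynomial.coeff_add, hf, hg, map_add, map_add]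

theorem map_wPoly {S S' : Type} [CommRing S] [CommRing S'] {p q : ℕ} (φ : S →+* S')
    (a : idxSet p q → S) : map φ (wPoly S p q a) = wPoly S' p q (φ ∘ a) := by
  simp [wPoly]

variable {K : Type} [Field K] {p q : ℕ}

/-- The Weierstraß polynomial over `K[T]` whose coefficients are those of the line `a + T t`. -/
noncomputable def wPolyLine (a t : idxSet p q → K) : MvPolynomial (Fin 2) K[X] :=
  wPoly K[X] p q fun i => Polynomial.C (a i) + Polynomial.C (t i) * Polynomial.X

theorem map_constantCoeff_wPolyLine (a t : idxSet p q → K) :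
    map Polynomial.constantCoeff (wPolyLine a t) = wPoly K p q a := by
  rw [wPolyLine, map_wPoly]
  congr 1
  funext i
  simp

theorem coeff_one_eval_wPolyLine (a t : idxSet p q → K) (P : K × K) :
    (eval (Polynomial.C ∘ ![P.1, P.2]) (wPolyLine a t)).coeff 1 =
      eval t (nodeLinForm K p q P.1 P.2) := by
  have key : eval (Polynomial.C ∘ ![P.1, P.2]) (wPolyLine a t) =
      Polynomial.C (eval ![P.1, P.2] (wPoly K p q a)) +
        Polynomial.C (eval t (nodeLinForm K p q P.1 P.2)) * Polynomial.X := by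
    simp only [wPolyLine, wPoly, nodeLinForm, map_add, map_sub, map_sum, map_mul, map_pow, eval_X,
      eval_C, Function.comp_apply, Matrix.cons_val_zero, Matrix.cons_val_one,
      Matrix.cons_val_fin_one, Finset.sum_mul, add_mul, Finset.sum_add_distrib, ← add_assoc,
      add_right_inj]
    exact Finset.sum_congr rfl fun i _ => by ring
  rw [key, Polynomial.coeff_add, Polynomial.coeff_C_succ, Polynomial.coeff_C_mul,
    Polynomial.coeff_X_one, zero_add, mul_one]

theorem eval_homogeneousComponent_shift_genDelta (hp : (p : K) ≠ 0) (hq : (q : K) ≠ 0)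
    (a t : idxSet p q → K) (k : ℕ)
    (hf : HasLeadingPow (curveWeight p q) 0 (q - 1) (pderiv 0 (wPolyLine a t)))
    (hg : HasLeadingPow (curveWeight p q) 1 (p - 1) (pderiv 1 (wPolyLine a t))) :
    eval t (homogeneousComponent k (aeval (fun i => X i + C (a i)) (genDelta K p q))) =
      (jacobianMatrix (curveWeight_nonneg p q) hf hg).det.coeff k := by
  have hunit {n : ℕ} (hn : (n : K) ≠ 0) : IsUnit (n : coefRing K p q) := by
    simpa using hn.isUnit.map (C : K →+* coefRing K p q)
  let φ : coefRing K p q →ₐ[K] K[X] :=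
    (aeval fun i => Polynomial.C (t i) * Polynomial.X).comp (aeval fun i => X i + C (a i))
  have hφ : map (φ : coefRing K p q →+* K[X]) (genF K p q) = wPolyLine a t := by
    rw [show genF K p q = wPoly (coefRing K p q) p q X from rfl, map_wPoly, wPolyLine]
    congr 1
    funext i
    simp [φ, add_comm]
  have hF : IsWeierstrass p q (genF K p q) := isWeierstrass_wPoly X
  have hF₀ := hF.hasLeadingPow_pderiv_zero (hunit hq)
  have hF₁ := hF.hasLeadingPow_pderiv_one (hunit hp)
  have hΔ : genDelta K p q = (jacobianMatrix (curveWeight_nonneg p q) hF₀ hF₁).det :=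
    norm_mk_eq_det_mulMatrix _ hF₀ hF₁ (genF K p q)
  rw [← coeff_aeval_C_mul_X, ← jacobianMatrix_map hφ _ hF₀ hF₁, ← AlgHom.comp_apply, hΔ,
    AlgHom.map_det]
  rfl

theorem exists_homogeneousComponent_shift_genDelta [IsAlgClosed K] {κ : Type*} [Fintype κ]
    (hp : (p : K) ≠ 0) (hq : (q : K) ≠ 0) (a : idxSet p q → K) {P : κ → K × K}
    (hP : Function.Injective P) (hnode : ∀ j, IsNodeAt K (wPoly K p q a) (P j))
    (hall : ∀ Q, IsSingAt K (wPoly K p q a) Q → ∃ j, Q = P j) :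
    (∀ k < Fintype.card κ, homogeneousComponent k
        (aeval (fun i : idxSet p q => X i + C (a i)) (genDelta K p q)) = 0) ∧
      ∃ e : K, e ≠ 0 ∧ homogeneousComponent (Fintype.card κ)
          (aeval (fun i : idxSet p q => X i + C (a i)) (genDelta K p q)) =
        C e * ∏ j, nodeLinForm K p q (P j).1 (P j).2 := by
  have hunit {n : ℕ} (hn : (n : K) ≠ 0) : IsUnit (n : K[X]) := by
    simpa using hn.isUnit.map Polynomial.C
  obtain ⟨e, he, h⟩ := exists_coeff_det_jacobianMatrix (curveWeight_nonneg p q)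
    ((isWeierstrass_wPoly a).hasLeadingPow_pderiv_zero hq.isUnit)
    ((isWeierstrass_wPoly a).hasLeadingPow_pderiv_one hp.isUnit) hP hnode hall
  have hf (t : idxSet p q → K) :=
    IsWeierstrass.hasLeadingPow_pderiv_zero (F := wPolyLine a t) (isWeierstrass_wPoly _) (hunit hq)
  have hg (t : idxSet p q → K) :=
    IsWeierstrass.hasLeadingPow_pderiv_one (F := wPolyLine a t) (isWeierstrass_wPoly _) (hunit hp)
  have hdet t := h _ (map_constantCoeff_wPolyLine a t) (hf t) (hg t)
  refine ⟨fun k hk => MvPolynomial.funext fun t => ?_, e, he, MvPolynomial.funext fun t => ?_⟩ <;>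
    rw [eval_homogeneousComponent_shift_genDelta hp hq a t _ (hf t) (hg t)]
  · rw [(hdet t).1 k hk, map_zero]
  · simp only [(hdet t).2, map_mul, eval_C, map_prod, coeff_one_eval_wPolyLine]

end Discriminant

section PoleOrder

open scoped Polynomial

theorem eq_zero_of_isWeightedHomogeneous_of_mem_weightLE {σ R : Type*} [CommRing R] {w : σ → ℤ}
    {f : MvPolynomial σ R} {m n : ℤ} (hf : IsWeightedHomogeneous w f n)
    (hfm : f ∈ weightLE w m) (hmn : m < n) : f = 0 := by
  ext d
  by_contra hd
  exact hmn.not_ge ((hf hd).symm.trans_le (mem_weightLE.1 hfm d hd))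

theorem sub_weightedHomogeneousComponent_mem {σ R : Type*} [CommRing R] {w : σ → ℤ}
    {f : MvPolynomial σ R} {n : ℤ} (hf : f ∈ weightLE w n) :
    f - weightedHomogeneousComponent w n f ∈ weightLE w (n - 1) := by
  refine mem_weightLE.2 fun d hd => ?_
  rw [coeff_sub, coeff_weightedHomogeneousComponent] at hd
  split_ifs at hd with h
  · exact absurd (sub_self _) hd
  · rw [sub_zero] at hd
    exact Int.le_sub_one_of_lt (lt_of_le_of_ne (mem_weightLE.1 hf d hd) h)

theorem mem_weightLE_of_mul_mem {σ R : Type*} [CommRing R] [IsDomain R] {w : σ → ℤ}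
    {f g h : MvPolynomial σ R} {n N : ℤ} (hw : 0 ≤ w) (hh : IsWeightedHomogeneous w h n)
    (h0 : h ≠ 0) (hf : f - h ∈ weightLE w (n - 1)) (hfg : f * g ∈ weightLE w N) :
    g ∈ weightLE w (N - n) := by
  obtain ⟨M, hM⟩ := exists_mem_weightLE w g
  induction M using int_induction_of_neg with
  | neg M hneg =>
    rw [weightLE_eq_bot_of_neg hw hneg, Submodule.mem_bot] at hM
    exact hM ▸ zero_mem _
  | step M ih =>
    rcases le_or_gt M (N - n) with hle | hlt
    · exact weightLE_mono hle hM
    have hsub := sub_weightedHomogeneousComponent_mem hM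
    have htop : h * weightedHomogeneousComponent w M g ∈ weightLE w (n + M - 1) := by
      rw [show h * weightedHomogeneousComponent w M g = f * g - (f - h) * g -
        h * (g - weightedHomogeneousComponent w M g) by ring]
      refine sub_mem (sub_mem (weightLE_mono (by linarith) hfg)
        (weightLE_mono (by linarith) (mul_mem_weightLE hf hM)))
        (weightLE_mono (by linarith) (mul_mem_weightLE (m := n) ?_ hsub))
      exact mem_weightLE.2 fun d hd => (hh hd).le
    have := eq_zero_of_isWeightedHomogeneous_of_mem_weightLE
      (hh.mul (weightedHomogeneousComponent_isWeightedHomogeneous M g)) htop (by linarith)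
    rw [(mul_eq_zero.1 this).resolve_left h0, sub_zero] at hsub
    exact ih hsub

variable {R : Type*} [CommRing R] {p q : ℕ} {F f g : MvPolynomial (Fin 2) R}

/-- The substitution `X = T ^ p`, `Y = T ^ q`, which parametrizes the curve `Y ^ p = X ^ q` given
by the terms of highest weight of a Weierstraß polynomial. -/
noncomputable def cuspParam (R : Type*) [CommRing R] (p q : ℕ) :
    MvPolynomial (Fin 2) R →ₐ[R] R[X] :=
  aeval ![Polynomial.X ^ p, Polynomial.X ^ q]

theorem cuspParam_monomial (d : Fin 2 →₀ ℕ) (c : R) :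
    cuspParam R p q (monomial d c) = Polynomial.monomial (d 0 * p + d 1 * q) c := by
  rw [cuspParam, aeval_monomial, Finsupp.prod_fintype _ _ (by simp), Fin.prod_univ_two,
    Polynomial.algebraMap_eq, ← Polynomial.C_mul_X_pow_eq_monomial, pow_add, mul_comm (d 0),
    mul_comm (d 1), pow_mul, pow_mul]
  rfl

theorem coeff_cuspParam (f : MvPolynomial (Fin 2) R) (k : ℕ) :
    (cuspParam R p q f).coeff k =
      ∑ d ∈ f.support, if d 0 * p + d 1 * q = k then coeff d f else 0 := by
  conv_lhs => rw [f.as_sum, map_sum, Polynomial.finsetSum_coeff]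
  simp only [cuspParam_monomial, Polynomial.coeff_monomial]

theorem coeff_cuspParam_eq_zero {n : ℤ} {k : ℕ} (hf : f ∈ weightLE (curveWeight p q) n)
    (hk : n < k) : (cuspParam R p q f).coeff k = 0 := by
  rw [coeff_cuspParam]
  refine Finset.sum_eq_zero fun d hd => if_neg fun hdk => hk.not_ge ?_
  have := mem_weightLE.1 hf d (mem_support_iff.1 hd)
  rw [weight_curveWeight] at this
  rw [← hdk]
  exact_mod_cast this

theorem coeff_cuspParam_mul {M N : ℕ} (hf : f ∈ weightLE (curveWeight p q) M)
    (hg : g ∈ weightLE (curveWeight p q) N) :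
    (cuspParam R p q (f * g)).coeff (M + N) =
      (cuspParam R p q f).coeff M * (cuspParam R p q g).coeff N := by
  rw [map_mul]
  exact Polynomial.coeff_mul_add_eq_of_natDegree_le
    (Polynomial.natDegree_le_iff_coeff_eq_zero.2 fun k hk =>
      coeff_cuspParam_eq_zero hf (by exact_mod_cast hk))
    (Polynomial.natDegree_le_iff_coeff_eq_zero.2 fun k hk =>
      coeff_cuspParam_eq_zero hg (by exact_mod_cast hk))

theorem eq_of_mul_add_mul_eq {a b c d : ℕ} (hp : p ≠ 0) (hco : p.Coprime q) (hb : b < p)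
    (hd : d < p) (h : a * p + b * q = c * p + d * q) : a = c ∧ b = d := by
  have hmod : b * q ≡ d * q [MOD p] := by
    simpa [Nat.ModEq, Nat.mul_add_mod'] using congrArg (· % p) h
  obtain rfl := (hmod.cancel_right_of_coprime hco).eq_of_lt_of_lt hb hd
  exact ⟨mul_right_cancel₀ hp (Nat.add_right_cancel h), rfl⟩

theorem exists_mem_weightLE_coeff_cuspParam_ne_zero (hp : p ≠ 0) (hco : p.Coprime q)
    (hf : f ∈ restrictSupport R {d | d 1 < p}) (h0 : f ≠ 0) :
    ∃ N : ℕ, f ∈ weightLE (curveWeight p q) N ∧ (cuspParam R p q f).coeff N ≠ 0 := by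
  obtain ⟨d, hd, hmax⟩ := f.support.exists_max_image (fun d => d 0 * p + d 1 * q)
    (support_nonempty.2 h0)
  refine ⟨d 0 * p + d 1 * q, mem_weightLE.2 fun e he => ?_, ?_⟩
  · rw [weight_curveWeight]
    exact_mod_cast hmax e (mem_support_iff.2 he)
  · rw [coeff_cuspParam, Finset.sum_eq_single_of_mem d hd, if_pos rfl]
    · exact mem_support_iff.1 hd
    · refine fun e he hne => if_neg fun hed => hne (Finsupp.ext ?_)
      have hlt {x} (hx : x ∈ f.support) : x 1 < p :=
        mem_restrictSupport_iff_coeff.1 hf x (mem_support_iff.1 hx)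
      exact Fin.forall_fin_two.2 (eq_of_mul_add_mul_eq hp hco (hlt he) (hlt hd) hed)

/-- On the curve `F = 0`, whose unique place at infinity is parametrized by `(T ^ p, T ^ q)` up to
lower order terms, `f` has a pole of order `N`: modulo `F`, it has a representative of weight `N`
whose terms of weight `N` do not cancel on `Y ^ p = X ^ q`. -/
def HasPole (p q : ℕ) (F f : MvPolynomial (Fin 2) R) (N : ℕ) : Prop :=
  ∃ g ∈ weightLE (curveWeight p q) N, F ∣ f - g ∧ (cuspParam R p q g).coeff N ≠ 0

theorem IsWeierstrass.hasLeadingPow_single (hF : IsWeierstrass p q F) (hp : p ≠ 0) (hq : q ≠ 0) :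
    HasLeadingPow (Pi.single 1 1) 1 p F := by
  have hweight (d : Fin 2 →₀ ℕ) : Finsupp.weight (Pi.single 1 1 : Fin 2 → ℤ) d = d 1 := by
    rw [Finsupp.weight_apply, Finsupp.sum_fintype _ _ (by simp), Fin.sum_univ_two]
    simp
  refine ⟨1, isUnit_one, ?_⟩
  rw [show F - C 1 * X 1 ^ p = F - (X 1 ^ p - X 0 ^ q) - X 0 ^ q by rw [C_1]; ring,
    Pi.single_eq_same, mul_one]
  refine sub_mem (mem_weightLE.2 fun d hd => ?_) (weightLE_mono ?_ (X_pow_mem_weightLE 0 q))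
  · have hlow := mem_weightLE.1 hF d hd
    rw [weight_curveWeight] at hlow
    have hlt : (d 1 * q : ℤ) < p * q := by
      linarith [mul_nonneg (Nat.cast_nonneg (α := ℤ) (d 0)) (Nat.cast_nonneg p)]
    rw [hweight]
    exact Int.le_sub_one_of_lt (lt_of_mul_lt_mul_right hlt (Nat.cast_nonneg q))
  · rw [Pi.single_eq_of_ne zero_ne_one, mul_zero]
    omega

theorem IsWeierstrass.exists_dvd_sub (hF : IsWeierstrass p q F) (hp : p ≠ 0) (hq : q ≠ 0)
    (f : MvPolynomial (Fin 2) R) : ∃ r ∈ restrictSupport R {d | d 1 < p}, F ∣ f - r := by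
  obtain ⟨N, hN⟩ := exists_mem_weightLE (Pi.single 1 1) f
  obtain ⟨r, -, hr, u, -, rfl⟩ := exists_division (s := {1}) (n := fun _ => p) (f := fun _ => F)
    (Pi.single_nonneg.2 zero_le_one) (by simpa using hF.hasLeadingPow_single hp hq) hN
  exact ⟨r, by simpa using hr, by simp⟩

namespace IsWeierstrass

theorem mem_weightLE_of_mul_mem [IsDomain R] (hF : IsWeierstrass p q F) (hp : p ≠ 0) {N : ℤ}
    (h : F * g ∈ weightLE (curveWeight p q) N) :
    g ∈ weightLE (curveWeight p q) (N - p * q) := by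
  refine _root_.mem_weightLE_of_mul_mem (curveWeight_nonneg p q) (.sub ?_ ?_) (fun h0 => ?_) hF h
  · simpa using (isWeightedHomogeneous_X R (curveWeight p q) 1).pow p
  · simpa [mul_comm] using (isWeightedHomogeneous_X R (curveWeight p q) 0).pow q
  · simpa [hp] using congrArg (eval ![1, 0]) h0

theorem eq_zero_of_dvd [IsDomain R] (hF : IsWeierstrass p q F) (hp : p ≠ 0) {N : ℤ}
    (hf : f ∈ weightLE (curveWeight p q) N) (hN : N < p * q) (h : F ∣ f) : f = 0 := by
  obtain ⟨g, rfl⟩ := h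
  have := hF.mem_weightLE_of_mul_mem hp hf
  rw [weightLE_eq_bot_of_neg (curveWeight_nonneg p q) (by linarith), Submodule.mem_bot] at this
  rw [this, mul_zero]

theorem coeff_cuspParam_eq_zero_of_dvd [IsDomain R] (hF : IsWeierstrass p q F) (hp : p ≠ 0)
    {N : ℕ} (hf : f ∈ weightLE (curveWeight p q) N) (h : F ∣ f) :
    (cuspParam R p q f).coeff N = 0 := by
  obtain ⟨g, rfl⟩ := h
  have hg := hF.mem_weightLE_of_mul_mem hp hf
  have hcusp : cuspParam R p q (X 1 ^ p - X 0 ^ q) = 0 := by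
    simp [cuspParam, ← pow_mul, mul_comm]
  rw [← sub_add_cancel F (X 1 ^ p - X 0 ^ q), add_mul, map_add, map_mul _ (X 1 ^ p - X 0 ^ q),
    hcusp, zero_mul, add_zero]
  exact coeff_cuspParam_eq_zero (mul_mem_weightLE hF hg) (by linarith)

end IsWeierstrass

theorem IsWeierstrass.mem_weightLE (hF : IsWeierstrass p q F) :
    F ∈ weightLE (curveWeight p q) (p * q) := by
  rw [← sub_add_cancel F (X 1 ^ p - X 0 ^ q)]
  refine add_mem (weightLE_mono (by linarith) hF)
    (sub_mem (X_pow_mem_weightLE 1 p) (weightLE_mono ?_ (X_pow_mem_weightLE 0 q)))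
  rw [curveWeight_zero, mul_comm]

namespace HasPole

variable {M N : ℕ}

theorem le_of_mem_weightLE [IsDomain R] (hF : IsWeierstrass p q F) (hp : p ≠ 0)
    (hf : HasPole p q F f M) {n : ℤ} (hg : g ∈ weightLE (curveWeight p q) n) (hfg : F ∣ f - g) :
    M ≤ n := by
  obtain ⟨g', hg', hfg', hne⟩ := hf
  by_contra! hlt
  refine hne ?_
  have := hF.coeff_cuspParam_eq_zero_of_dvd hp (sub_mem hg' (weightLE_mono hlt.le hg))
    (by simpa using dvd_sub hfg hfg')
  rwa [map_sub, Polynomial.coeff_sub, coeff_cuspParam_eq_zero hg hlt, sub_zero] at this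

theorem unique [IsDomain R] (hF : IsWeierstrass p q F) (hp : p ≠ 0) (hM : HasPole p q F f M)
    (hN : HasPole p q F f N) : M = N := by
  obtain ⟨g, hg, hfg, -⟩ := id hM
  obtain ⟨g', hg', hfg', -⟩ := id hN
  refine le_antisymm ?_ ?_
  · exact_mod_cast hM.le_of_mem_weightLE hF hp hg' hfg'
  · exact_mod_cast hN.le_of_mem_weightLE hF hp hg hfg

theorem not_dvd [IsDomain R] (hF : IsWeierstrass p q F) (hp : p ≠ 0) (hM : HasPole p q F f M) :
    ¬F ∣ f := fun h => by
  have := hM.le_of_mem_weightLE hF hp (n := -1) (zero_mem _) (by rwa [sub_zero])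
  omega

theorem congr (hf : HasPole p q F f M) (h : F ∣ g - f) : HasPole p q F g M := by
  obtain ⟨f', hf', hff', hne⟩ := hf
  exact ⟨f', hf', by simpa using dvd_add h hff', hne⟩

theorem mul [IsDomain R] (hf : HasPole p q F f M) (hg : HasPole p q F g N) :
    HasPole p q F (f * g) (M + N) := by
  obtain ⟨f', hf', hff', hf0⟩ := hf
  obtain ⟨g', hg', hgg', hg0⟩ := hg
  refine ⟨f' * g', by exact_mod_cast mul_mem_weightLE hf' hg', ?_, ?_⟩
  · rw [show f * g - f' * g' = (f - f') * g + f' * (g - g') by ring]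
    exact dvd_add (hff'.mul_right _) (hgg'.mul_left _)
  · rw [coeff_cuspParam_mul hf' hg']
    exact mul_ne_zero hf0 hg0

end HasPole

theorem IsWeierstrass.exists_hasPole (hF : IsWeierstrass p q F) (hp : p ≠ 0) (hq : q ≠ 0)
    (hco : p.Coprime q) (hf : ¬F ∣ f) : ∃ N, HasPole p q F f N := by
  obtain ⟨r, hr, hfr⟩ := hF.exists_dvd_sub hp hq f
  obtain ⟨N, hN, hne⟩ := exists_mem_weightLE_coeff_cuspParam_ne_zero hp hco hr fun h0 =>
    hf (by rwa [h0, sub_zero] at hfr)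
  exact ⟨N, r, hN, hfr, hne⟩

theorem HasLeadingPow.hasPole [Nontrivial R] {n : ℕ}
    (hf : HasLeadingPow (curveWeight p q) 1 n f) : HasPole p q F f (n * q) := by
  obtain ⟨c, hc, hlow⟩ := hf
  have hmem : f ∈ weightLE (curveWeight p q) (n * q : ℕ) := by
    rw [← sub_add_cancel f (C c * X 1 ^ n)]
    refine add_mem (weightLE_mono ?_ hlow)
      (C_mul_mem_weightLE c (weightLE_mono ?_ (X_pow_mem_weightLE 1 n))) <;> simp
  refine ⟨f, hmem, by simp, ?_⟩
  rw [← sub_add_cancel f (C c * X 1 ^ n), map_add, Polynomial.coeff_add,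
    coeff_cuspParam_eq_zero hlow (by simp), zero_add, C_mul_X_pow_eq_monomial, cuspParam_monomial]
  simpa using hc.ne_zero

end PoleOrder

section Annihilator

variable {R : Type*} [CommRing R] {p q N : ℕ} {F f g u v : MvPolynomial (Fin 2) R}

-- Among the elements of `(f, g, F)` not divisible by `F`, choose `m = s f + t g + c F` of least
-- pole order. Then `g (t u - s v) ≡ u m`, so if `F` did not divide `u`, whose pole order is less
-- than that of `g`, then `t u - s v` would have smaller pole order than `m`.
theorem IsWeierstrass.dvd_of_dvd_mul_add_mul [IsDomain R] (hF : IsWeierstrass p q F) (hp : p ≠ 0)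
    (hq : q ≠ 0) (hco : p.Coprime q) (hg : HasPole p q F g N) {n : ℤ} (hn : n < N)
    (hun : u ∈ weightLE (curveWeight p q) n) (hu : u ∈ Ideal.span {f, g} ⊔ Ideal.span {F})
    (hv : v ∈ Ideal.span {f, g} ⊔ Ideal.span {F}) (h : F ∣ u * f + v * g) : F ∣ u := by
  classical
  by_contra hFu
  set T := Ideal.span {f, g} ⊔ Ideal.span {F}
  obtain ⟨a, ha⟩ := hF.exists_hasPole hp hq hco hFu
  have haN : (a : ℤ) < N := (ha.le_of_mem_weightLE hF hp hun (by simp)).trans_lt hn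
  have hex : ∃ b, ∃ m ∈ T, HasPole p q F m b :=
    ⟨N, g, Ideal.mem_sup_left (Ideal.subset_span (by simp)), hg⟩
  obtain ⟨m, hmT, hm⟩ := Nat.find_spec hex
  obtain ⟨_, hx, _, hy, hxy⟩ := Submodule.mem_sup.1 hmT
  obtain ⟨s, t, rfl⟩ := Ideal.mem_span_pair.1 hx
  obtain ⟨c, rfl⟩ := Ideal.mem_span_singleton'.1 hy
  have hcongr : F ∣ g * (t * u - s * v) - u * m := by
    obtain ⟨k, hk⟩ := h
    exact ⟨-(s * k + c * u), by linear_combination u * hxy - s * hk⟩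
  have hum := (ha.mul hm).congr hcongr
  obtain ⟨b, hb⟩ := hF.exists_hasPole hp hq hco fun hdvd => hum.not_dvd hF hp (hdvd.mul_left g)
  have hmin : Nat.find hex ≤ b :=
    Nat.find_min' hex ⟨_, sub_mem (T.mul_mem_left t hu) (T.mul_mem_left s hv), hb⟩
  have hsum := (hg.mul hb).unique hF hp hum
  omega

theorem IsWeierstrass.exists_mul_eq_of_mul_mem_jacobianIdeal [Nontrivial R]
    (hF : IsWeierstrass p q F) (hp : IsUnit (p : R)) (hq : IsUnit (q : R)) {n : ℤ}
    (hg : g ∈ weightLE (curveWeight p q) n) (hFg : F * g ∈ jacobianIdeal F) :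
    ∃ u ∈ weightLE (curveWeight p q) (n + p), ∃ v ∈ weightLE (curveWeight p q) (n + q),
      F * g = u * pderiv 0 F + v * pderiv 1 F := by
  have hp1 : 0 < p := Nat.pos_of_ne_zero fun h => hp.ne_zero (by simp [h])
  have hq1 : 0 < q := Nat.pos_of_ne_zero fun h => hq.ne_zero (by simp [h])
  have hw := curveWeight_nonneg p q
  have hX := hF.hasLeadingPow_pderiv_zero hq
  have hY := hF.hasLeadingPow_pderiv_one hp
  obtain ⟨-, u, hu, v, hv, huv⟩ :=
    exists_eq_normalForm_add hw hX hY (mul_mem_weightLE hF.mem_weightLE hg)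
  rw [(normalForm_eq_zero_iff hw hX hY).2 hFg, zero_add] at huv
  refine ⟨u, weightLE_mono (le_of_eq ?_) hu, v, weightLE_mono (le_of_eq ?_) hv, huv⟩
  · rw [Nat.cast_pred hq1, curveWeight_zero]
    ring
  · rw [Nat.cast_pred hp1, curveWeight_one]
    ring

variable {K : Type} [Field K] {G h : MvPolynomial (Fin 2) K}

theorem IsWeierstrass.eq_zero_of_mul_mem_jacobianIdeal [IsAlgClosed K] (hG : IsWeierstrass p q G)
    (hp : (p : K) ≠ 0) (hq : (q : K) ≠ 0) (hco : p.Coprime q)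
    (hnode : ∀ Q, IsSingAt K G Q → IsNodeAt K G Q)
    (hh : h ∈ weightLE (curveWeight p q) (p * q - 2 * p - 2 * q))
    (hGh : G * h ∈ jacobianIdeal G) : h = 0 := by
  have hp0 : p ≠ 0 := fun h0 => hp (by rw [h0, Nat.cast_zero])
  have hq0 : q ≠ 0 := fun h0 => hq (by rw [h0, Nat.cast_zero])
  obtain ⟨u, hu, v, hv, huv⟩ :=
    hG.exists_mul_eq_of_mul_mem_jacobianIdeal hp.isUnit hq.isUnit hh hGh
  have hmem {x} (hx : ∀ Q, IsNodeAt K G Q → eval ![Q.1, Q.2] x = 0) :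
      x ∈ jacobianIdeal G ⊔ Ideal.span {G} :=
    mem_of_mul_mem_of_eval_eq_zero hnode le_sup_left
      (Ideal.mul_mem_right _ _ (Ideal.mem_sup_right (Ideal.mem_span_singleton_self G)))
      fun Q hQ => hx Q (hnode Q hQ)
  have hY : HasPole p q G (pderiv 1 G) ((p - 1) * q) :=
    (hG.hasLeadingPow_pderiv_one hp.isUnit).hasPole
  have hu0 : u = 0 := by
    refine hG.eq_zero_of_dvd hp0 hu (by omega) ?_
    refine hG.dvd_of_dvd_mul_add_mul hp0 hq0 hco hY ?_ hu
      (hmem fun _ hQ => (hQ.eval_eq_zero_of_mul_eq huv).1)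
      (hmem fun _ hQ => (hQ.eval_eq_zero_of_mul_eq huv).2) ⟨h, huv.symm⟩
    rw [Nat.cast_mul, Nat.cast_pred (by omega), sub_one_mul]
    omega
  rw [hu0, zero_mul, zero_add] at huv
  have hv0 : v = 0 := by
    refine hG.eq_zero_of_dvd hp0 hv (by omega) ?_
    by_contra hGv
    obtain ⟨b, hb⟩ := hG.exists_hasPole hp0 hq0 hco hGv
    exact (hb.mul hY).not_dvd hG hp0 ⟨h, huv.symm⟩
  rw [hv0, zero_mul] at huv
  exact (mul_eq_zero.1 huv).resolve_left fun h0 => hY.not_dvd hG hp0 (by simp [h0])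

end Annihilator

section Socle

theorem HasLeadingPow.coeff_mul_eq_zero {σ R : Type*} [CommRing R] {w : σ → ℤ} {i : σ} {k : ℕ}
    {f u : MvPolynomial σ R} {d : σ →₀ ℕ} (hf : HasLeadingPow w i k f) (hd : d i < k)
    (hu : u ∈ weightLE w (Finsupp.weight w d - k * w i)) : coeff d (u * f) = 0 := by
  classical
  obtain ⟨c, -, hlow⟩ := hf
  have hlead : coeff d (u * (C c * X i ^ k)) = 0 := by
    rw [C_mul_X_pow_eq_monomial, coeff_mul_monomial',
      if_neg fun h => hd.not_ge (Finsupp.single_le_iff.1 h)]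
  have hrest : coeff d (u * (f - C c * X i ^ k)) = 0 := by
    refine coeff_eq_zero_of_mem_restrictSupport (mul_mem_weightLE hu hlow) fun h => ?_
    rw [Set.mem_ofPred_eq] at h
    linarith
  rw [← sub_add_cancel f (C c * X i ^ k), mul_add, coeff_add, hlead, hrest, add_zero]

/-- The largest exponent of `expBox (m + 1) (n + 1)`. The corresponding coordinate of the normal
form plays the role of a residue: multiplication followed by it is a perfect pairing. -/
noncomputable def boxCorner (m n : ℕ) : Fin 2 →₀ ℕ := Finsupp.single 0 m + Finsupp.single 1 n

@[simp]
theorem boxCorner_zero (m n : ℕ) : boxCorner m n 0 = m := by simp [boxCorner]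

@[simp]
theorem boxCorner_one (m n : ℕ) : boxCorner m n 1 = n := by simp [boxCorner]

theorem le_boxCorner_iff {m n : ℕ} {d : Fin 2 →₀ ℕ} :
    d ≤ boxCorner m n ↔ d ∈ expBox (m + 1) (n + 1) := by
  simp [Finsupp.le_def, Fin.forall_fin_two, expBox]

section

variable {S : Type*} [CommRing S] {w : Fin 2 → ℤ} {m n : ℕ} {f g h r : MvPolynomial (Fin 2) S}
  (hw : 0 ≤ w) (hf : HasLeadingPow w 0 (m + 1) f) (hg : HasLeadingPow w 1 (n + 1) g)

theorem coeff_boxCorner_normalForm (hh : h ∈ weightLE w (Finsupp.weight w (boxCorner m n))) :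
    coeff (boxCorner m n) (normalForm hw hf hg h) = coeff (boxCorner m n) h := by
  obtain ⟨-, u, hu, v, hv, huv⟩ := exists_eq_normalForm_add hw hf hg hh
  have hf0 := hf.coeff_mul_eq_zero (by simp) hu
  have hg0 := hg.coeff_mul_eq_zero (by simp) hv
  rw [congrArg (coeff (boxCorner m n)) huv, coeff_add, coeff_add, hf0, hg0, add_zero, add_zero]

theorem mem_weightLE_of_coeff_boxCorner_eq_zero {N : ℤ}
    (hr : r ∈ restrictSupport S (expBox (m + 1) (n + 1)))
    (h : ∀ e, Finsupp.weight w e < N →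
      coeff (boxCorner m n) (normalForm hw hf hg (r * monomial e 1)) = 0) :
    r ∈ weightLE w (Finsupp.weight w (boxCorner m n) - N) := by
  by_contra hrN
  have h0 : r ≠ 0 := fun h0 => hrN (h0 ▸ zero_mem _)
  obtain ⟨d, hd, hmax⟩ := r.support.exists_max_image (Finsupp.weight w) (support_nonempty.2 h0)
  replace hmax (x) (hx : coeff x r ≠ 0) := hmax x (mem_support_iff.2 hx)
  rw [mem_support_iff] at hd
  -- The corner exponent `d + e` of `r * monomial e 1` comes only from the leading exponent `d`.
  obtain ⟨e, he⟩ := exists_add_of_le (le_boxCorner_iff.2 (mem_restrictSupport_iff_coeff.1 hr d hd))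
  have hweight := congrArg (Finsupp.weight w) he
  rw [map_add] at hweight
  have heN : Finsupp.weight w e < N := by
    by_contra! hle
    exact hrN (mem_weightLE.2 fun x hx => by linarith [hmax x hx])
  have hre : r * monomial e 1 ∈ weightLE w (Finsupp.weight w (boxCorner m n)) := by
    rw [hweight]
    exact mul_mem_weightLE (mem_weightLE.2 hmax) (monomial_mem_weightLE le_rfl)
  apply hd
  rw [← h e heN, coeff_boxCorner_normalForm hw hf hg hre, he, coeff_mul_monomial, mul_one]

theorem mem_span_of_forall_coeff_boxCorner_eq_zero
    (h0 : ∀ e, coeff (boxCorner m n) (normalForm hw hf hg (h * monomial e 1)) = 0) :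
    h ∈ Ideal.span {f, g} := by
  rw [← normalForm_eq_zero_iff hw hf hg]
  have hbot := mem_weightLE_of_coeff_boxCorner_eq_zero hw hf hg
    (N := Finsupp.weight w (boxCorner m n) + 1) (normalForm_mem (h := h) hw hf hg) fun e _ => by
      rw [← h0 e]
      congr 1
      refine (normalForm_eq_of_mem hw hf hg (normalForm_mem hw hf hg) ?_).symm
      rw [← sub_add_sub_cancel _ (normalForm hw hf hg h * monomial e 1), ← sub_mul]
      exact add_mem (Ideal.mul_mem_right _ _ (sub_normalForm_mem hw hf hg))
        (sub_normalForm_mem hw hf hg)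
  rwa [weightLE_eq_bot_of_neg hw (by linarith), Submodule.mem_bot] at hbot

end

theorem exists_eq_coeff_boxCorner_normalForm_mul {K : Type*} [Field K] {w : Fin 2 → ℤ} {m n : ℕ}
    {f g : MvPolynomial (Fin 2) K} (hw : 0 ≤ w) (hf : HasLeadingPow w 0 (m + 1) f)
    (hg : HasLeadingPow w 1 (n + 1) g)
    (ψ : Module.Dual K (MvPolynomial (Fin 2) K ⧸ Ideal.span {f, g})) :
    ∃ r ∈ restrictSupport K (expBox (m + 1) (n + 1)), ∀ h,
      ψ (Ideal.Quotient.mk _ h) = coeff (boxCorner m n) (normalForm hw hf hg (r * h)) := by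
  have := Module.Finite.of_basis (monomialBasis hw hf hg)
  let pairing : (MvPolynomial (Fin 2) K ⧸ Ideal.span {f, g}) →ₗ[K] Module.Dual K _ :=
    (LinearMap.mul K _).compr₂
      ((monomialBasis hw hf hg).coord ⟨boxCorner m n, le_boxCorner_iff.1 le_rfl⟩)
  have hpairing (x y) : pairing (Ideal.Quotient.mk _ x) (Ideal.Quotient.mk _ y) =
      coeff (boxCorner m n) (normalForm hw hf hg (x * y)) := rfl
  have hinj : Function.Injective pairing := by
    refine (injective_iff_map_eq_zero _).2 fun x hx => ?_
    obtain ⟨x, rfl⟩ := Ideal.Quotient.mk_surjective x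
    refine Ideal.Quotient.eq_zero_iff_mem.2 ?_
    refine mem_span_of_forall_coeff_boxCorner_eq_zero hw hf hg fun e => ?_
    rw [← hpairing, hx, LinearMap.zero_apply]
  obtain ⟨x, rfl⟩ := (LinearMap.injective_iff_surjective_of_finrank_eq_finrank
    Subspace.dual_finrank_eq.symm).1 hinj ψ
  obtain ⟨r, rfl⟩ := (normalFormEquiv hw hf hg).surjective x
  exact ⟨r, r.2, fun h => hpairing r h⟩

theorem IsWeierstrass.eq_zero_of_dual_eq_zero {K : Type} [Field K] [IsAlgClosed K] {p q : ℕ}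
    {G : MvPolynomial (Fin 2) K} (hG : IsWeierstrass p q G) (hp : 1 < p) (hq : 1 < q)
    (hpK : (p : K) ≠ 0) (hqK : (q : K) ≠ 0) (hco : p.Coprime q)
    (hnode : ∀ Q, IsSingAt K G Q → IsNodeAt K G Q)
    {ψ : Module.Dual K (MvPolynomial (Fin 2) K ⧸ jacobianIdeal G)}
    (hψG : ∀ h, ψ (Ideal.Quotient.mk _ (G * h)) = 0)
    (hψ : ∀ d, Finsupp.weight (curveWeight p q) d < p * q →
      ψ (Ideal.Quotient.mk _ (monomial d 1)) = 0) : ψ = 0 := by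
  obtain ⟨m, rfl⟩ := Nat.exists_eq_add_of_le' hq
  obtain ⟨n, rfl⟩ := Nat.exists_eq_add_of_le' hp
  have hw := curveWeight_nonneg (n + 2) (m + 2)
  have hX : HasLeadingPow (curveWeight (n + 2) (m + 2)) 0 (m + 1) (pderiv 0 G) :=
    hG.hasLeadingPow_pderiv_zero hqK.isUnit
  have hY : HasLeadingPow (curveWeight (n + 2) (m + 2)) 1 (n + 1) (pderiv 1 G) :=
    hG.hasLeadingPow_pderiv_one hpK.isUnit
  obtain ⟨r, hr, hrψ⟩ := exists_eq_coeff_boxCorner_normalForm_mul hw hX hY ψ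
  have hGr : G * r ∈ jacobianIdeal G :=
    mem_span_of_forall_coeff_boxCorner_eq_zero hw hX hY fun e => by
      rw [mul_right_comm, mul_comm _ r, ← hrψ, hψG]
  have hrN := mem_weightLE_of_coeff_boxCorner_eq_zero hw hX hY hr fun e he => by
    rw [← hrψ, hψ e he]
  have hr0 : r = 0 := by
    refine hG.eq_zero_of_mul_mem_jacobianIdeal hpK hqK hco hnode (weightLE_mono ?_ hrN) hGr
    rw [weight_curveWeight, boxCorner_zero, boxCorner_one]
    push_cast
    linarith
  refine LinearMap.ext fun x => ?_
  obtain ⟨h, rfl⟩ := Ideal.Quotient.mk_surjective x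
  rw [hrψ, hr0, zero_mul, normalForm_eq_self hw hX hY (zero_mem _), coeff_zero,
    LinearMap.zero_apply]

end Socle

section NodalCurve

variable {K : Type} [Field K] {p q : ℕ}

theorem mem_idxSet_iff {t : ℕ × ℕ} : t ∈ idxSet p q ↔ t.1 * p + t.2 * q < p * q := by
  rw [idxSet, Finset.mem_filter, Finset.mem_product, Finset.mem_range, Finset.mem_range]
  refine and_iff_right_of_imp fun h => ⟨?_, ?_⟩
  · exact Nat.lt_of_mul_lt_mul_right (a := p) (by linarith [Nat.zero_le (t.2 * q)])
  · exact Nat.lt_of_mul_lt_mul_right (a := q) (by linarith [Nat.zero_le (t.1 * p)])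

theorem coeff_single_nodeLinForm (ξ η : K) (i : idxSet p q) :
    coeff (Finsupp.single i 1) (nodeLinForm K p q ξ η) = ξ ^ i.1.1 * η ^ i.1.2 := by
  classical
  simp only [nodeLinForm, coeff_sum, coeff_C_mul, coeff_X, Finsupp.single_left_inj one_ne_zero,
    mul_ite, mul_one, mul_zero, Finset.sum_ite_eq', Finset.mem_univ, if_true]

variable [IsAlgClosed K] {κ : Type*}

theorem linearIndependent_nodeLinForm [Finite κ] (hp : 1 < p) (hq : 1 < q) (hpK : (p : K) ≠ 0)
    (hqK : (q : K) ≠ 0) (hco : p.Coprime q) (a : idxSet p q → K) {P : κ → K × K}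
    (hP : Function.Injective P) (hnode : ∀ j, IsNodeAt K (wPoly K p q a) (P j))
    (hall : ∀ Q, IsSingAt K (wPoly K p q a) Q → ∃ j, Q = P j) :
    LinearIndependent K fun j => nodeLinForm K p q (P j).1 (P j).2 := by
  classical
  cases nonempty_fintype κ
  refine Fintype.linearIndependent_iff.2 fun c hc i => ?_
  have hW := isWeierstrass_wPoly a
  let ψ : Module.Dual K (MvPolynomial (Fin 2) K ⧸ jacobianIdeal (wPoly K p q a)) :=
    ∑ j, c j • (Ideal.Quotient.liftₐ (jacobianIdeal (wPoly K p q a)) (aeval ![(P j).1, (P j).2])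
      fun f hf => by rw [aeval_eq_eval]; exact (hnode j).1.eval_eq_zero hf).toLinearMap
  have hψ (f) : ψ (Ideal.Quotient.mk _ f) = ∑ j, c j * eval ![(P j).1, (P j).2] f := by
    simp [ψ]
  have hψ0 : ψ = 0 := by
    refine hW.eq_zero_of_dual_eq_zero hp hq hpK hqK hco (fun Q hQ => ?_) (fun h => ?_)
      fun d hd => ?_
    · obtain ⟨j, rfl⟩ := hall Q hQ
      exact hnode j
    · rw [hψ]
      exact Finset.sum_eq_zero fun j _ => by rw [map_mul, (hnode j).1.1, zero_mul, mul_zero]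
    · have hd' : (d 0, d 1) ∈ idxSet p q := by
        rw [weight_curveWeight] at hd
        exact mem_idxSet_iff.2 (by exact_mod_cast hd)
      have := congrArg (coeff (Finsupp.single ⟨(d 0, d 1), hd'⟩ 1)) hc
      simp only [coeff_sum, coeff_smul, coeff_single_nodeLinForm, coeff_zero, smul_eq_mul] at this
      rw [hψ, ← this]
      refine Finset.sum_congr rfl fun j _ => ?_
      rw [eval_monomial, Finsupp.prod_fintype _ _ fun _ => pow_zero _, Fin.prod_univ_two, one_mul]
      rfl
  obtain ⟨s, -, hs, -⟩ := exists_dual_system (curveWeight_nonneg p q)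
    (hW.hasLeadingPow_pderiv_zero hqK.isUnit) (hW.hasLeadingPow_pderiv_one hpK.isUnit) hP hnode
  have := hψ (s i)
  simpa [hψ0, hs] using this.symm

theorem lowest_term_of_delta_at_nodal_curve_general [Fintype κ] (hp : 1 < p) (hq : 1 < q)
    (hpK : (p : K) ≠ 0) (hqK : (q : K) ≠ 0) (hco : p.Coprime q) (a : idxSet p q → K) {P : κ → K × K}
    (hP : Function.Injective P) (hnode : ∀ j, IsNodeAt K (wPoly K p q a) (P j))
    (hall : ∀ Q, IsSingAt K (wPoly K p q a) Q → ∃ j, Q = P j) :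
    (∀ m < Fintype.card κ, homogeneousComponent m
        (aeval (fun i : idxSet p q => X i + C (a i)) (genDelta K p q)) = 0) ∧
    (∃ e : K, e ≠ 0 ∧ homogeneousComponent (Fintype.card κ)
        (aeval (fun i : idxSet p q => X i + C (a i)) (genDelta K p q)) =
          C e * ∏ j, nodeLinForm K p q (P j).1 (P j).2) ∧
    LinearIndependent K fun j => nodeLinForm K p q (P j).1 (P j).2 := by
  obtain ⟨hlow, htop⟩ := exists_homogeneousComponent_shift_genDelta hpK hqK a hP hnode hall
  exact ⟨hlow, htop, linearIndependent_nodeLinForm hp hq hpK hqK hco a hP hnode hall⟩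

end NodalCurve

/-- Let `C_a` be a nodal curve with exactly `l ≥ 1` nodes `(ξ_1,η_1), …, (ξ_l,η_l)`, and
expand `Δ` in the shifted variables `T_νμ = A_νμ − a_νμ`. Then all homogeneous components
of degree `< l` vanish, the homogeneous component of degree `l` equals `e·∏ᵢ Lᵢ` for some
`e ≠ 0`, where `Lᵢ = Σ ξᵢ^ν ηᵢ^μ T_νμ`, and `L₁, …, L_l` are linearly independent over `K`. -/
theorem lowest_term_of_delta_at_nodal_curve
    (K : Type) [Field K] [IsAlgClosed K] [CharZero K]
    (p q : ℕ) (hp : 1 < p) (hpq : p < q) (hco : Nat.Coprime p q)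
    (a : idxSet p q → K) (l : ℕ) (hl : 1 ≤ l)
    (P : Fin l → K × K) (hPinj : Function.Injective P)
    (hsing : ∀ Q : K × K, IsSingAt K (wPoly K p q a) Q ↔ ∃ i, Q = P i)
    (hnode : ∀ i, IsNodeAt K (wPoly K p q a) (P i)) :
    (∀ m : ℕ, m < l →
      homogeneousComponent m
        (aeval (fun i : idxSet p q => X i + C (a i)) (genDelta K p q)) = 0) ∧
    (∃ e : K, e ≠ 0 ∧
      homogeneousComponent l
          (aeval (fun i : idxSet p q => X i + C (a i)) (genDelta K p q)) =
        C e * ∏ i : Fin l, nodeLinForm K p q (P i).1 (P i).2) ∧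
    LinearIndependent K (fun i : Fin l => nodeLinForm K p q (P i).1 (P i).2) := by
  have hpK : (p : K) ≠ 0 := Nat.cast_ne_zero.2 (by lia)
  have hqK : (q : K) ≠ 0 := Nat.cast_ne_zero.2 (by lia)
  simpa only [Fintype.card_fin] using lowest_term_of_delta_at_nodal_curve_general hp
    (hp.trans hpq) hpK hqK hco a hPinj hnode fun Q hQ => (hsing Q).1 hQ
end

section
/- Let α ≠ β be points of K^I such that C_α and C_β are both singular and such that the set Sing(C_α) ∩ Sing(C_β) of common singular points is nonempty, and let L = {α + t(β−α) : t ∈ K} be the line through α and β. Then for every γ ∈ L the curve C_γ is singular, and for all but finitely many γ ∈ L the set of singular points of C_γ equals Sing(C_α) ∩ Sing(C_β). -/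
open MvPolynomial

/-!
Put `F = F_α` and `H = F_β - F_α`, so that the curves of the line are the members `F + t H = 0` of
a pencil. A singular point of `F + t H = 0` with `H ≠ 0` is a critical point of the rational
function `F / H`, and `-t` is its value there. On the scheme of critical points `F / H` has zero
differential, so in characteristic zero it is algebraic over `K` and takes finitely many values.

The points with `H = 0` lie on the base locus `F = H = 0`, and a base point that is not singular on
both `F = 0` and `H = 0` is singular on at most one member of the pencil; so it remains to see that
the base locus is finite. Give `X` the weight `p` and `Y` the weight `q`. As `p` and `q` are
coprime, the monomials of `H` have distinct weights, so modulo `H` its leading monomial is a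
combination of monomials of smaller weight. Together with `Y ^ p - X ^ q`, whose two terms have
equal weight, this reduces every monomial of large weight to smaller ones, and `X`, `Y` are integral
over `K` modulo `F` and `H`.
-/

section ZeroDifferential

theorem formallySmooth_of_charZero (k E : Type*) [Field k] [CharZero k] [Field E] [Algebra k E] :
    Algebra.FormallySmooth k E := by
  obtain ⟨ι, v, hv⟩ := exists_isTranscendenceBasis' k E
  have := hv.isAlgebraic_field
  exact .of_algebraicIndependent_of_isSeparable hv.1

theorem mapBaseChange_injective_of_formallySmooth (R S T : Type*) [CommRing R] [CommRing S]
    [CommRing T] [Algebra R S] [Algebra S T] [Algebra R T] [IsScalarTower R S T]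
    [Algebra.FormallySmooth S T] :
    Function.Injective (KaehlerDifferential.mapBaseChange R S T) := by
  rw [injective_iff_map_eq_zero]
  intro z hz
  obtain ⟨w, rfl⟩ := (Algebra.H1Cotangent.exact_δ_mapBaseChange R S T z).1 hz
  rw [Subsingleton.elim w 0, map_zero]

variable {K : Type*} [Field K] [CharZero K]

open Polynomial TensorProduct in
theorem isAlgebraic_of_D_eq_zero_of_field {E : Type*} [Field E] [Algebra K E] {s : E}
    (hs : KaehlerDifferential.D K E s = 0) : IsAlgebraic K s := by
  -- If `s` is transcendental, then `E` is formally smooth over `K[s]`, so `ds` cannot vanish.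
  by_contra htrans
  let : Algebra K[X] E := (Polynomial.aeval s).toAlgebra
  have hmap (f : K[X]) : algebraMap K[X] E f = Polynomial.aeval s f := rfl
  have : IsScalarTower K K[X] E := .of_algebraMap_eq fun r => by simp [hmap]
  have : FaithfulSMul K[X] E :=
    (faithfulSMul_iff_algebraMap_injective _ _).2 (transcendental_iff_injective.1 htrans)
  let : Algebra (FractionRing K[X]) E := FractionRing.liftAlgebra K[X] E
  have : Algebra.FormallySmooth K[X] (FractionRing K[X]) := .of_isLocalization (nonZeroDivisors _)
  have : Algebra.FormallySmooth (FractionRing K[X]) E := formallySmooth_of_charZero _ _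
  have : Algebra.FormallySmooth K[X] E := .comp _ (FractionRing K[X]) _
  have hX : (1 : E) ⊗ₜ[K[X]] KaehlerDifferential.D K K[X] Polynomial.X = 0 :=
    mapBaseChange_injective_of_formallySmooth K K[X] E (by simp [hmap, hs])
  have hone := congrArg (TensorProduct.rid K[X] E)
    (congrArg (LinearMap.lTensor E (KaehlerDifferential.polynomialEquiv K).toLinearMap) hX)
  simp at hone

theorem isAlgebraic_of_D_eq_zero {A : Type*} [CommRing A] [IsNoetherianRing A] [Algebra K A]
    {f : A} (hf : KaehlerDifferential.D K A f = 0) : IsAlgebraic K f := by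
  have hprime (P : Ideal A) (hP : P ∈ minimalPrimes A) :
      ∃ m : Polynomial K, m ≠ 0 ∧ Polynomial.aeval f m ∈ P := by
    have : P.IsPrime := hP.1.1
    have hres : KaehlerDifferential.D K P.ResidueField (algebraMap A P.ResidueField f) = 0 := by
      rw [← KaehlerDifferential.map_D K K A, hf, map_zero]
    obtain ⟨m, hm, hroot⟩ := isAlgebraic_of_D_eq_zero_of_field hres
    rw [Polynomial.aeval_algebraMap_apply, Ideal.algebraMap_residueField_eq_zero] at hroot
    exact ⟨m, hm, hroot⟩
  choose! m hm hmem using hprime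
  let s := (minimalPrimes.finite_of_isNoetherianRing A).toFinset
  have hnil : IsNilpotent (Polynomial.aeval f (∏ P ∈ s, m P)) := by
    rw [← mem_nilradical, nilradical, ← Ideal.sInf_minimalPrimes, Ideal.mem_sInf]
    intro P hP
    refine P.mem_of_dvd ((Polynomial.aeval f).map_dvd (Finset.dvd_prod_of_mem m ?_)) (hmem P hP)
    exact (Set.Finite.mem_toFinset _).2 hP
  obtain ⟨n, hn⟩ := hnil
  refine ⟨(∏ P ∈ s, m P) ^ n, pow_ne_zero _ (Finset.prod_ne_zero_iff.2 fun P hP => ?_), ?_⟩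
  · exact hm P ((Set.Finite.mem_toFinset _).1 hP)
  · rw [map_pow, hn]

end ZeroDifferential

theorem finite_range_of_isAlgebraic {ι K : Type*} [Field K] {f : ι → K} (hf : IsAlgebraic K f) :
    (Set.range f).Finite := by
  obtain ⟨m, hm, hroot⟩ := hf
  refine (m.rootSet_finite K).subset ?_
  rintro _ ⟨i, rfl⟩
  rw [Polynomial.mem_rootSet_of_ne hm, ← Pi.evalAlgHom_apply K (fun _ : ι => K) i f,
    Polynomial.aeval_algHom_apply, hroot, map_zero]

theorem derivation_eq_sum_pderiv_smul {R M σ : Type*} [CommRing R] [AddCommGroup M] [Module R M]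
    [Module (MvPolynomial σ R) M] [IsScalarTower R (MvPolynomial σ R) M] [Fintype σ]
    (δ : Derivation R (MvPolynomial σ R) M) (G : MvPolynomial σ R) :
    δ G = ∑ i, pderiv i G • δ (X i) := by
  classical
  let δ' : Derivation R (MvPolynomial σ R) M :=
    ∑ i, (LinearMap.toSpanSingleton (MvPolynomial σ R) M (δ (X i))).compDer (pderiv i)
  have hδ' (G : MvPolynomial σ R) : δ' G = ∑ i, pderiv i G • δ (X i) := by
    rw [← Derivation.coeFnAddMonoidHom_apply, map_sum, Finset.sum_apply]
    rfl
  have hδ : δ = δ' := derivation_ext fun j => by simp [hδ', pderiv_X, Pi.single_apply]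
  rw [← hδ', ← hδ]

theorem derivation_eq_zero_of_mul_eq {R A M : Type*} [CommRing R] [CommRing A] [Algebra R A]
    [AddCommGroup M] [Module R M] [Module A M] (D : Derivation R A M) {f g u : A} (hu : IsUnit u)
    (hfu : f * u = g) (hD : u • D g = g • D u) : D f = 0 := by
  have hmul : u • u • D f = 0 := by
    rw [← hfu, D.leibniz, smul_add, mul_smul, smul_comm u f, add_eq_left] at hD
    exact hD
  rwa [hu.smul_eq_zero, hu.smul_eq_zero] at hmul

theorem exists_algHom_away_quotient {k R B : Type*} [CommRing k] [CommRing R] [Algebra k R]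
    [CommRing B] [Algebra k B] {J : Ideal R} {h : R} {φ : R →ₐ[k] B} (hJ : ∀ r ∈ J, φ r = 0)
    (hh : IsUnit (φ h)) :
    ∃ ψ : Localization.Away (Ideal.Quotient.mk J h) →ₐ[k] B,
      ∀ r, ψ (algebraMap R _ r) = φ r := by
  have hlift (r : R) : Ideal.Quotient.liftₐ J φ hJ (Ideal.Quotient.mk J r) = φ r :=
    Ideal.Quotient.lift_mk J (φ : R →+* B) hJ
  have hunit (y : Submonoid.powers (Ideal.Quotient.mk J h)) :
      IsUnit (Ideal.Quotient.liftₐ J φ hJ y) := by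
    obtain ⟨_, n, rfl⟩ := y
    rw [map_pow, hlift]
    exact hh.pow n
  refine ⟨IsLocalization.liftAlgHom hunit, fun r => ?_⟩
  rw [IsScalarTower.algebraMap_apply R (R ⧸ J), IsLocalization.liftAlgHom_apply,
    IsLocalization.lift_eq]
  exact hlift r

section Pencil

variable {K σ : Type*} [CommRing K]

/-- The value and the first partial derivatives of a polynomial at the point `x`. -/
noncomputable def firstJet (x : σ → K) : MvPolynomial σ K →ₗ[K] K × (σ → K) :=
  (aeval x).toLinearMap.prod
    (LinearMap.pi fun i => (aeval x).toLinearMap ∘ₗ (pderiv i).toLinearMap)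

theorem firstJet_apply (x : σ → K) (G : MvPolynomial σ K) :
    firstJet x G = (eval x G, fun i => eval x (pderiv i G)) := by
  simp only [← coe_aeval_eq_eval]
  rfl

/-- The `K`-rational singular points of the hypersurface `G = 0`. -/
def singularLocus (G : MvPolynomial σ K) : Set (σ → K) :=
  {x | firstJet x G = 0}

theorem mem_singularLocus {x : σ → K} {G : MvPolynomial σ K} :
    x ∈ singularLocus G ↔ eval x G = 0 ∧ ∀ i, eval x (pderiv i G) = 0 := by
  simp [singularLocus, firstJet_apply, funext_iff]

theorem singularLocus_inter_singularLocus_sub (F G : MvPolynomial σ K) :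
    singularLocus F ∩ singularLocus (G - F) = singularLocus F ∩ singularLocus G := by
  ext x
  simp +contextual [singularLocus]

theorem singularLocus_inter_subset_singularLocus_add_smul (F H : MvPolynomial σ K) (t : K) :
    singularLocus F ∩ singularLocus H ⊆ singularLocus (F + t • H) := by
  intro x hx
  simp_all [singularLocus]

theorem subsingleton_setOf_mem_singularLocus_add_smul [IsDomain K]
    {F H : MvPolynomial σ K} {x : σ → K} (hx : x ∉ singularLocus F ∩ singularLocus H) :
    {t : K | x ∈ singularLocus (F + t • H)}.Subsingleton := by
  intro s hs t ht
  simp only [singularLocus, Set.mem_ofPred_eq, map_add, map_smul] at hs ht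
  by_contra hst
  have hH : firstJet x H = 0 := by
    refine (smul_eq_zero_iff_right (sub_ne_zero.2 hst)).1 ?_
    rw [sub_smul, ← add_sub_add_left_eq_sub, hs, ht, sub_zero]
  exact hx ⟨by simpa [hH, singularLocus] using hs, hH⟩

/-- The ideal generated by the numerators of the partial derivatives of `F / H`. -/
noncomputable def criticalIdeal (F H : MvPolynomial σ K) : Ideal (MvPolynomial σ K) :=
  Ideal.span (Set.range fun i => H * pderiv i F - F * pderiv i H)

/-- The coordinate ring of the scheme of critical points of the rational function `F / H`. -/
abbrev CriticalRing (F H : MvPolynomial σ K) : Type _ :=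
  Localization.Away (Ideal.Quotient.mk (criticalIdeal F H) H)

theorem algebraMap_criticalRing_eq_zero {F H G : MvPolynomial σ K} (hG : G ∈ criticalIdeal F H) :
    algebraMap _ (CriticalRing F H) G = 0 := by
  rw [IsScalarTower.algebraMap_apply _ (MvPolynomial σ K ⧸ criticalIdeal F H),
    Ideal.Quotient.algebraMap_eq, Ideal.Quotient.eq_zero_iff_mem.2 hG, map_zero]

theorem smul_D_eq_smul_D_criticalRing [Finite σ] (F H : MvPolynomial σ K) :
    algebraMap _ (CriticalRing F H) H •
        KaehlerDifferential.D K (CriticalRing F H) (algebraMap _ (CriticalRing F H) F) =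
      algebraMap _ (CriticalRing F H) F •
        KaehlerDifferential.D K (CriticalRing F H) (algebraMap _ (CriticalRing F H) H) := by
  have := Fintype.ofFinite σ
  let δ := (KaehlerDifferential.D K (CriticalRing F H)).compAlgebraMap (MvPolynomial σ K)
  have hδ (G : MvPolynomial σ K) : KaehlerDifferential.D K (CriticalRing F H) (algebraMap _ _ G) =
      ∑ i, pderiv i G • δ (X i) := derivation_eq_sum_pderiv_smul δ G
  rw [hδ, hδ, algebraMap_smul, algebraMap_smul, Finset.smul_sum, Finset.smul_sum]
  refine Finset.sum_congr rfl fun i _ => ?_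
  rw [← sub_eq_zero, smul_smul, smul_smul, ← sub_smul, ← algebraMap_smul (CriticalRing F H),
    algebraMap_criticalRing_eq_zero (Ideal.subset_span ⟨i, rfl⟩), zero_smul]

theorem eval_eq_zero_of_mem_criticalIdeal {F H : MvPolynomial σ K} {x : σ → K} {t : K}
    (hx : x ∈ singularLocus (F + t • H)) {G : MvPolynomial σ K} (hG : G ∈ criticalIdeal F H) :
    eval x G = 0 := by
  suffices h : criticalIdeal F H ≤ RingHom.ker (eval x) from h hG
  simp only [mem_singularLocus, map_add, Derivation.map_smul, smul_eval] at hx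
  refine Ideal.span_le.2 ?_
  rintro _ ⟨i, rfl⟩
  simp only [SetLike.mem_coe, RingHom.mem_ker, map_sub, map_mul]
  linear_combination eval x H * hx.2 i - eval x (pderiv i H) * hx.1

end Pencil

section PencilCharZero

variable {K σ : Type*} [Field K] [CharZero K] [Finite σ]

theorem exists_isAlgebraic_mul_eq_criticalRing (F H : MvPolynomial σ K) :
    ∃ f : CriticalRing F H, IsAlgebraic K f ∧ f * algebraMap _ _ H = algebraMap _ _ F := by
  have hunit : IsUnit (algebraMap _ (CriticalRing F H) H) :=
    IsLocalization.Away.algebraMap_isUnit (Ideal.Quotient.mk (criticalIdeal F H) H)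
  obtain ⟨f, hf⟩ := hunit.dvd (a := algebraMap _ (CriticalRing F H) F)
  rw [mul_comm] at hf
  refine ⟨f, isAlgebraic_of_D_eq_zero ?_, hf.symm⟩
  exact derivation_eq_zero_of_mul_eq _ hunit hf.symm (smul_D_eq_smul_D_criticalRing F H)

theorem finite_setOf_singular_off_baseLocus (F H : MvPolynomial σ K) :
    {t : K | ∃ x ∈ singularLocus (F + t • H), eval x H ≠ 0}.Finite := by
  obtain ⟨f, hf, hfH⟩ := exists_isAlgebraic_mul_eq_criticalRing F H
  have hvalues : (Set.range fun ψ : CriticalRing F H →ₐ[K] K => ψ f).Finite :=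
    finite_range_of_isAlgebraic <|
      hf.algHom (AlgHom.pi fun ψ : CriticalRing F H →ₐ[K] K => ψ)
  refine (hvalues.image Neg.neg).subset ?_
  rintro t ⟨x, hx, hHx⟩
  obtain ⟨ψ, hψ⟩ := exists_algHom_away_quotient (φ := aeval x)
    (fun G hG => eval_eq_zero_of_mem_criticalIdeal hx hG) (by simpa using hHx)
  refine ⟨ψ f, ⟨ψ, rfl⟩, mul_right_cancel₀ hHx ?_⟩
  have hfx := congrArg ψ hfH
  have hFx := (mem_singularLocus.1 hx).1
  rw [map_mul, hψ, hψ, aeval_eq_eval] at hfx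
  rw [map_add, smul_eval] at hFx
  linear_combination -hfx - hFx

theorem finite_setOf_singularLocus_add_smul_ne {F H : MvPolynomial σ K}
    (hbase : {x | eval x F = 0 ∧ eval x H = 0}.Finite) :
    {t : K | singularLocus (F + t • H) ≠ singularLocus F ∩ singularLocus H}.Finite := by
  let B := {x | eval x F = 0 ∧ eval x H = 0} \ (singularLocus F ∩ singularLocus H)
  have hB : (⋃ x ∈ B, {t : K | x ∈ singularLocus (F + t • H)}).Finite :=
    hbase.sdiff.biUnion fun x hx => (subsingleton_setOf_mem_singularLocus_add_smul hx.2).finite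
  refine ((finite_setOf_singular_off_baseLocus F H).union hB).subset fun t ht => ?_
  obtain ⟨x, hx, hxFH⟩ := Set.not_subset.1 fun hsub =>
    ht (hsub.antisymm (singularLocus_inter_subset_singularLocus_add_smul F H t))
  by_cases hH : eval x H = 0
  · have hF : eval x F = 0 := by simpa [hH] using (mem_singularLocus.1 hx).1
    exact .inr (Set.mem_biUnion (x := x) ⟨⟨hF, hH⟩, hxFH⟩ hx)
  · exact .inl ⟨x, hx, hH⟩

end PencilCharZero

section WeightFiltration

variable (K : Type*) {A : Type*} [CommRing K] [CommRing A] [Algebra K A] (p q : ℕ) (x y : A)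

/-- The span of the monomials in `x, y` of weight less than `n`, where `x` has weight `p` and `y`
has weight `q`. -/
def weightSpan (n : ℕ) : Submodule K A :=
  Submodule.span K ((fun m : ℕ × ℕ => x ^ m.1 * y ^ m.2) '' {m | m.1 * p + m.2 * q < n})

variable {K}

/-- The part `Σ a_{νμ} x^ν y^μ` of a normed Weierstraß polynomial of type `p, q`, evaluated at
`x, y` and as a linear function of its coefficients. -/
noncomputable def lowerTerms : (idxSet p q → K) →ₗ[K] A :=
  Fintype.linearCombination K fun i => x ^ (i : ℕ × ℕ).1 * y ^ (i : ℕ × ℕ).2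

variable {p q x y}

theorem mem_idxSet {m : ℕ × ℕ} :
    m ∈ idxSet p q ↔ m.1 < q ∧ m.2 < p ∧ m.1 * p + m.2 * q < p * q := by
  simp [idxSet, and_assoc]

theorem weight_injOn_idxSet (hpq : p.Coprime q) :
    Set.InjOn (fun m : ℕ × ℕ => m.1 * p + m.2 * q) (idxSet p q) := by
  intro m hm n hn (hw : m.1 * p + m.2 * q = n.1 * p + n.2 * q)
  have hmp := (mem_idxSet.1 hm).2.1
  have hmod : m.2 * q ≡ n.2 * q [MOD p] := by
    simpa [Nat.ModEq, Nat.add_mod] using congrArg (· % p) hw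
  have hsnd : m.2 = n.2 :=
    (hmod.cancel_right_of_coprime hpq).eq_of_lt_of_lt hmp (mem_idxSet.1 hn).2.1
  rw [hsnd, Nat.add_right_cancel_iff] at hw
  exact Prod.ext (Nat.eq_of_mul_eq_mul_right (Nat.zero_lt_of_lt hmp) hw) hsnd

theorem pow_mul_pow_mem_weightSpan {i j n : ℕ} (h : i * p + j * q < n) :
    x ^ i * y ^ j ∈ weightSpan K p q x y n :=
  Submodule.subset_span ⟨(i, j), h, rfl⟩

theorem pow_mul_pow_mul_mem_weightSpan {z : A} {n : ℕ} (hz : z ∈ weightSpan K p q x y n)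
    (i j : ℕ) : x ^ i * y ^ j * z ∈ weightSpan K p q x y (i * p + j * q + n) := by
  induction hz using Submodule.span_induction with
  | mem _ hm =>
    obtain ⟨m, hm, rfl⟩ := hm
    rw [mul_mul_mul_comm, ← pow_add, ← pow_add]
    exact pow_mul_pow_mem_weightSpan (by grind)
  | zero => simp
  | add _ _ _ _ hz₁ hz₂ => rw [mul_add]; exact add_mem hz₁ hz₂
  | smul c _ _ hz => rw [mul_smul_comm]; exact Submodule.smul_mem _ c hz

theorem lowerTerms_mem_weightSpan (a : idxSet p q → K) :
    lowerTerms p q x y a ∈ weightSpan K p q x y (p * q) := by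
  rw [lowerTerms, Fintype.linearCombination_apply]
  exact sum_mem fun i _ =>
    Submodule.smul_mem _ _ (pow_mul_pow_mem_weightSpan (mem_idxSet.1 i.2).2.2)

theorem exists_leading_monomial_mem_weightSpan {k : Type*} [Field k] [Algebra k A]
    (hpq : p.Coprime q) {b : idxSet p q → k} (hb : b ≠ 0) (h : lowerTerms p q x y b = 0) :
    ∃ m ∈ idxSet p q, x ^ m.1 * y ^ m.2 ∈ weightSpan k p q x y (m.1 * p + m.2 * q) := by
  classical
  have hsupp : (Finset.univ.filter fun i => b i ≠ 0).Nonempty := by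
    simpa [Finset.filter_nonempty_iff] using Function.ne_iff.1 hb
  obtain ⟨i, hi, hmax⟩ := Finset.exists_max_image _
    (fun i : idxSet p q => (i : ℕ × ℕ).1 * p + (i : ℕ × ℕ).2 * q) hsupp
  refine ⟨i, i.2, ?_⟩
  rw [lowerTerms, Fintype.linearCombination_apply, ← Finset.add_sum_erase _ _ (Finset.mem_univ i),
    add_eq_zero_iff_eq_neg] at h
  rw [← Submodule.smul_mem_iff _ (Finset.mem_filter.1 hi).2, h]
  refine neg_mem (sum_mem fun j hj => ?_)
  by_cases hbj : b j = 0
  · simp [hbj]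
  · refine Submodule.smul_mem _ _ (pow_mul_pow_mem_weightSpan ?_)
    refine lt_of_le_of_ne (hmax j (by simpa using hbj)) fun hw => ?_
    exact Finset.ne_of_mem_erase hj (Subtype.ext (weight_injOn_idxSet hpq j.2 i.2 hw))

theorem pow_add_mul_pow_mem_weightSpan_iff (hF : y ^ p - x ^ q ∈ weightSpan K p q x y (p * q))
    (i j : ℕ) :
    x ^ (i + q) * y ^ j ∈ weightSpan K p q x y ((i + q) * p + j * q) ↔
      x ^ i * y ^ (j + p) ∈ weightSpan K p q x y (i * p + (j + p) * q) := by
  have hweight : (i + q) * p + j * q = i * p + (j + p) * q := by ring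
  have hdiff : x ^ i * y ^ (j + p) - x ^ (i + q) * y ^ j ∈
      weightSpan K p q x y (i * p + (j + p) * q) := by
    convert pow_mul_pow_mul_mem_weightSpan hF i j using 1
    · ring_nf
    · ring
  rw [hweight]
  exact ⟨fun h => (Submodule.sub_mem_iff_left _ h).1 hdiff,
    fun h => (Submodule.sub_mem_iff_right _ h).1 hdiff⟩

theorem pow_mul_pow_mem_weightSpan_self {k l : ℕ}
    (hF : y ^ p - x ^ q ∈ weightSpan K p q x y (p * q)) (hk : k ≤ q) (hl : l ≤ p)
    (hkl : x ^ k * y ^ l ∈ weightSpan K p q x y (k * p + l * q)) {i j : ℕ}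
    (h : 4 * (p * q) ≤ i * p + j * q) :
    x ^ i * y ^ j ∈ weightSpan K p q x y (i * p + j * q) := by
  have hmultiple {i j : ℕ} (hi : k ≤ i) (hj : l ≤ j) :
      x ^ i * y ^ j ∈ weightSpan K p q x y (i * p + j * q) := by
    obtain ⟨i, rfl⟩ := Nat.exists_eq_add_of_le' hi
    obtain ⟨j, rfl⟩ := Nat.exists_eq_add_of_le' hj
    convert pow_mul_pow_mul_mem_weightSpan hkl i j using 1
    · ring_nf
    · ring
  -- Exchanging `x ^ q` and `y ^ p`, of equal weight, produces a multiple of `x ^ k * y ^ l`.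
  by_cases hi : 2 * q ≤ i
  · obtain ⟨i, rfl⟩ := Nat.exists_eq_add_of_le' (show q ≤ i by lia)
    exact (pow_add_mul_pow_mem_weightSpan_iff hF i j).2 (hmultiple (by lia) (by lia))
  · have hj : 2 * p ≤ j := by nlinarith
    obtain ⟨j, rfl⟩ := Nat.exists_eq_add_of_le' (show p ≤ j by lia)
    exact (pow_add_mul_pow_mem_weightSpan_iff hF i j).1 (hmultiple (by lia) (by lia))

theorem pow_mul_pow_mem_weightSpan_of_forall_le {n : ℕ}
    (hmem : ∀ i j, n ≤ i * p + j * q → x ^ i * y ^ j ∈ weightSpan K p q x y (i * p + j * q))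
    (i j : ℕ) : x ^ i * y ^ j ∈ weightSpan K p q x y n := by
  induction hw : i * p + j * q using Nat.strong_induction_on generalizing i j with
  | _ w ih =>
    subst hw
    rcases lt_or_ge (i * p + j * q) n with hlt | hle
    · exact pow_mul_pow_mem_weightSpan hlt
    · refine Submodule.span_le.2 ?_ (hmem i j hle)
      rintro _ ⟨m, hm, rfl⟩
      exact ih _ hm m.1 m.2 rfl

theorem fg_weightSpan (hp : 0 < p) (hq : 0 < q) (n : ℕ) : (weightSpan K p q x y n).FG := by
  refine Submodule.fg_span (Set.Finite.image _ ?_)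
  refine ((Set.finite_Iio n).prod (Set.finite_Iio n)).subset fun m (hm : _ < n) => ?_
  exact ⟨show m.1 < n by nlinarith, show m.2 < n by nlinarith⟩

end WeightFiltration

theorem isIntegral_of_forall_pow_mem {R A : Type*} [CommRing R] [IsNoetherianRing R] [CommRing A]
    [Algebra R A] {N : Submodule R A} (hN : N.FG) {x : A} (hx : ∀ n : ℕ, x ^ n ∈ N) :
    IsIntegral R x := by
  refine .of_mem_of_fg (Algebra.adjoin R {x}) (hN.of_le ?_) x
    (Algebra.self_mem_adjoin_singleton R x)
  rw [Algebra.adjoin_eq_span, Submodule.span_le]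
  intro z hz
  obtain ⟨n, rfl⟩ := Submonoid.mem_closure_singleton.1 hz
  exact hx n

theorem isIntegral_of_lowerTerms_eq_zero {K A : Type*} [Field K] [CommRing A] [Algebra K A]
    {p q : ℕ} {x y : A} (hpq : p.Coprime q) {a b : idxSet p q → K} (hb : b ≠ 0)
    (hF : y ^ p - x ^ q + lowerTerms p q x y a = 0) (hH : lowerTerms p q x y b = 0) :
    IsIntegral K x ∧ IsIntegral K y := by
  obtain ⟨m, hm, hlead⟩ := exists_leading_monomial_mem_weightSpan hpq hb hH
  obtain ⟨hmq, hmp, -⟩ := mem_idxSet.1 hm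
  have hFmem : y ^ p - x ^ q ∈ weightSpan K p q x y (p * q) := by
    rw [eq_neg_of_add_eq_zero_left hF]
    exact neg_mem (lowerTerms_mem_weightSpan a)
  have hmem (i j : ℕ) : x ^ i * y ^ j ∈ weightSpan K p q x y (4 * (p * q)) :=
    pow_mul_pow_mem_weightSpan_of_forall_le
      (fun _ _ => pow_mul_pow_mem_weightSpan_self hFmem hmq.le hmp.le hlead) i j
  have hfg : (weightSpan K p q x y (4 * (p * q))).FG := fg_weightSpan (by lia) (by lia) _
  exact ⟨isIntegral_of_forall_pow_mem hfg fun n => by simpa using hmem n 0,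
    isIntegral_of_forall_pow_mem hfg fun n => by simpa using hmem 0 n⟩

theorem map_lowerTerms {K A B : Type*} [CommRing K] [CommRing A] [Algebra K A] [CommRing B]
    [Algebra K B] {p q : ℕ} (φ : A →ₐ[K] B) (x y : A) (a : idxSet p q → K) :
    φ (lowerTerms p q x y a) = lowerTerms p q (φ x) (φ y) a := by
  simp [lowerTerms, Fintype.linearCombination_apply]

theorem finite_baseLocus {K : Type*} [Field K] {p q : ℕ} (hpq : p.Coprime q)
    {a b : idxSet p q → K} (hb : b ≠ 0) :
    {P : Fin 2 → K | P 1 ^ p - P 0 ^ q + lowerTerms p q (P 0) (P 1) a = 0 ∧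
      lowerTerms p q (P 0) (P 1) b = 0}.Finite := by
  set B := {P : Fin 2 → K | P 1 ^ p - P 0 ^ q + lowerTerms p q (P 0) (P 1) a = 0 ∧
    lowerTerms p q (P 0) (P 1) b = 0}
  -- The coordinate functions satisfy both equations in the algebra of all functions on `B`.
  let coord (k : Fin 2) : B → K := fun P => P.1 k
  have hlower (c : idxSet p q → K) (P : B) :
      lowerTerms p q (coord 0) (coord 1) c P = lowerTerms p q (P.1 0) (P.1 1) c :=
    map_lowerTerms (Pi.evalAlgHom K (fun _ : B => K) P) _ _ _
  have hint : IsIntegral K (coord 0) ∧ IsIntegral K (coord 1) :=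
    isIntegral_of_lowerTerms_eq_zero hpq hb (a := a)
      (funext fun P => by simpa [hlower] using P.2.1)
      (funext fun P => by simpa [hlower] using P.2.2)
  have hrange : ∀ k, (Set.range (coord k)).Finite :=
    Fin.forall_fin_two.2 ⟨finite_range_of_isAlgebraic hint.1.isAlgebraic,
      finite_range_of_isAlgebraic hint.2.isAlgebraic⟩
  exact (Set.Finite.pi' hrange).subset fun P hP k => ⟨⟨P, hP⟩, rfl⟩

section Weierstrass

variable {K : Type} [CommRing K] {p q : ℕ}

theorem wPoly_eq (a : idxSet p q → K) :
    wPoly K p q a = X 1 ^ p - X 0 ^ q + lowerTerms p q (X 0) (X 1) a := by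
  simp only [wPoly, lowerTerms, Fintype.linearCombination_apply, smul_eq_C_mul, mul_assoc]

theorem wPoly_sub_wPoly (a b : idxSet p q → K) :
    wPoly K p q a - wPoly K p q b = lowerTerms p q (X 0) (X 1) (a - b) := by
  rw [wPoly_eq, wPoly_eq, add_sub_add_left_eq_sub, map_sub]

theorem wPoly_line (α β : idxSet p q → K) (t : K) :
    wPoly K p q (fun i => α i + t * (β i - α i)) =
      wPoly K p q α + t • (wPoly K p q β - wPoly K p q α) := by
  rw [wPoly_sub_wPoly, wPoly_eq, wPoly_eq, ← map_smul, add_assoc, ← map_add]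
  rfl

theorem eval_lowerTerms (a : idxSet p q → K) (P : Fin 2 → K) :
    eval P (lowerTerms p q (X 0) (X 1) a) = lowerTerms p q (P 0) (P 1) a := by
  rw [← aeval_eq_eval, map_lowerTerms, aeval_X, aeval_X]

theorem eval_wPoly (a : idxSet p q → K) (P : Fin 2 → K) :
    eval P (wPoly K p q a) = P 1 ^ p - P 0 ^ q + lowerTerms p q (P 0) (P 1) a := by
  simp only [wPoly_eq, map_add, map_sub, map_pow, eval_X, eval_lowerTerms]

theorem isSingAt_iff_mem_singularLocus {G : MvPolynomial (Fin 2) K} {P : K × K} :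
    IsSingAt K G P ↔ ![P.1, P.2] ∈ singularLocus G := by
  rw [mem_singularLocus, Fin.forall_fin_two, IsSingAt]

end Weierstrass

theorem line_through_curves_with_common_singularities_general (K : Type) [Field K] [CharZero K]
    {p q : ℕ} (hpq : p.Coprime q) {α β : idxSet p q → K} (hne : α ≠ β) :
    (∀ t : K, {P | IsSingAt K (wPoly K p q α) P} ∩ {P | IsSingAt K (wPoly K p q β) P} ⊆
      {P | IsSingAt K (wPoly K p q fun i => α i + t * (β i - α i)) P}) ∧
    {t : K |
      {P : K × K | IsSingAt K (wPoly K p q fun i => α i + t * (β i - α i)) P} ≠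
        {P : K × K | IsSingAt K (wPoly K p q α) P} ∩
          {P : K × K | IsSingAt K (wPoly K p q β) P}}.Finite := by
  set F := wPoly K p q α
  set G := wPoly K p q β
  have hbase : {x | eval x F = 0 ∧ eval x (G - F) = 0}.Finite := by
    simpa only [F, G, wPoly_sub_wPoly, eval_wPoly, eval_lowerTerms] using
      finite_baseLocus hpq (a := α) (sub_ne_zero.2 hne.symm)
  simp only [isSingAt_iff_mem_singularLocus, wPoly_line]
  refine ⟨fun t P hP => ?_, (finite_setOf_singularLocus_add_smul_ne hbase).subset ?_⟩
  · refine singularLocus_inter_subset_singularLocus_add_smul F (G - F) t ?_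
    rwa [singularLocus_inter_singularLocus_sub]
  · intro t ht heq
    rw [singularLocus_inter_singularLocus_sub] at heq
    exact ht (congrArg (Set.preimage fun P : K × K => ![P.1, P.2]) heq)

/-- **Proposition 1.8.** If `α ≠ β`, the curves `C_α`, `C_β` are singular and have a common
singular point, then every curve `C_γ` for `γ` on the line through `α` and `β` is singular,
and for all but finitely many `γ` on this line `Sing(C_γ) = Sing(C_α) ∩ Sing(C_β)`. -/
theorem line_through_curves_with_common_singularities
    (K : Type) [Field K] [IsAlgClosed K] [CharZero K]
    (p q : ℕ) (hp : 1 < p) (hpq : p < q) (hco : Nat.Coprime p q)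
    (α β : idxSet p q → K) (hne : α ≠ β)
    (hαsing : ∃ P : K × K, IsSingAt K (wPoly K p q α) P)
    (hβsing : ∃ P : K × K, IsSingAt K (wPoly K p q β) P)
    (hcommon : ∃ P : K × K, IsSingAt K (wPoly K p q α) P ∧ IsSingAt K (wPoly K p q β) P) :
    (∀ t : K, ∃ P : K × K,
      IsSingAt K (wPoly K p q fun i => α i + t * (β i - α i)) P) ∧
    {t : K |
      {P : K × K | IsSingAt K (wPoly K p q fun i => α i + t * (β i - α i)) P} ≠
        {P : K × K | IsSingAt K (wPoly K p q α) P} ∩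
          {P : K × K | IsSingAt K (wPoly K p q β) P}}.Finite := by
  obtain ⟨P, hP⟩ := hcommon
  exact (line_through_curves_with_common_singularities_general K hco hne).imp_left
    fun h t => ⟨P, h t hP⟩
end
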